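/- arXiv:0710.2898 — 2 statements merged into one kernel-verified Lean document; each statement's English description precedes it below -/
import Mathlib

section
/- Let A ∈ M_n be a complex n×n matrix and let 1 ≤ r < k ≤ n. Let 𝒮 be any subset of F_r containing the set 𝒮₀ = {2e^{iξ}‖A‖P : P ∈ P_r, ξ ∈ [0,2π)}. Then Λ_k(A) = ⋂{Λ_{k−r}(A + F) : F ∈ 𝒮}. -/
noncomputable section

open scoped InnerProductSpace
open Complex

variable {H : Type*} [NormedAddCommGroup H] [InnerProductSpace ℂ H] [CompleteSpace H]

/-- `P` is an orthogonal projection: self-adjoint and idempotent. -/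
def IsOrthProj (P : H →L[ℂ] H) : Prop :=
  IsSelfAdjoint P ∧ P ∘L P = P

/-- The rank of a bounded operator, as a cardinal. -/
def opRank (F : H →L[ℂ] H) : Cardinal :=
  Module.rank ℂ (LinearMap.range (F : H →ₗ[ℂ] H))

/-- The rank-`k` numerical range `Λ_k(A)`. -/
def rankKRange (k : ℕ) (A : H →L[ℂ] H) : Set ℂ :=
  { lam | ∃ P : H →L[ℂ] H, IsOrthProj P ∧ opRank P = k ∧ P ∘L A ∘L P = lam • P }

/-- The classical numerical range `W(A)`. -/
def numRange (A : H →L[ℂ] H) : Set ℂ :=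
  { z | ∃ x : H, ‖x‖ = 1 ∧ ⟪x, A x⟫_ℂ = z }

/-- `λ_k(T)`: the supremum over `k`-dimensional compressions of the `k`-th largest
eigenvalue of the compression (Courant–Fischer form: sup over `k`-dimensional
subspaces of the infimum of the Rayleigh quotient). -/
def lambdaSA (k : ℕ) (T : H →L[ℂ] H) : ℝ :=
  sSup { t : ℝ | ∃ V : Submodule ℂ H, Module.finrank ℂ V = k ∧
    ∀ x ∈ V, ‖x‖ = 1 → t ≤ (⟪x, T x⟫_ℂ).re }

/-- The real part `(T + T*)/2` of an operator. -/
def reOp (T : H →L[ℂ] H) : H →L[ℂ] H :=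
  (2 : ℂ)⁻¹ • (T + ContinuousLinearMap.adjoint T)

/-- The set `Ω_k(A)`. -/
def omegaK (k : ℕ) (A : H →L[ℂ] H) : Set ℂ :=
  { μ | ∀ ξ ∈ Set.Ico (0 : ℝ) (2 * Real.pi),
      (Complex.exp (ξ * Complex.I) * μ).re ≤ lambdaSA k (reOp (Complex.exp (ξ * Complex.I) • A)) }


set_option linter.unusedSectionVars false
section Helpers
open scoped Matrix

section LA
variable {E : Type*} [NormedAddCommGroup E] [InnerProductSpace ℂ E] [FiniteDimensional ℂ E]

/-- half-plane property -/
def HP (A : E →L[ℂ] E) (k : ℕ) (U : Submodule ℂ E) : Prop :=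
  ∀ᵐ z : ℂ, ∃ W : Submodule ℂ E, W ≤ U ∧ k ≤ Module.finrank ℂ W ∧
    ∀ x ∈ W, 0 ≤ (z * ⟪x, A x⟫_ℂ).re

def IsEig (A : E →L[ℂ] E) (U : Submodule ℂ E) (v : E) : Prop :=
  v ∈ U ∧ v ≠ 0 ∧ ∃ p q : ℂ, (p ≠ 0 ∨ q ≠ 0) ∧
    ∀ x ∈ U, p * ⟪v, A x⟫_ℂ + q * ⟪A v, x⟫_ℂ = 0

theorem ae_comb_ne (p q : ℂ) (h : p ≠ 0 ∨ q ≠ 0) :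
    ∀ᵐ z : ℂ, z * p + (starRingEnd ℂ) z * q ≠ 0 := by
  let L : ℂ →ₗ[ℝ] ℂ :=
    { toFun := fun z => z * p + (starRingEnd ℂ) z * q
      map_add' := fun x y => by simp; ring
      map_smul' := fun c x => by simp; ring }
  have hne : LinearMap.ker L ≠ ⊤ := by
    intro htop
    have h1 : L 1 = 0 := by rw [← LinearMap.mem_ker, htop]; trivial
    have h2 : L I = 0 := by rw [← LinearMap.mem_ker, htop]; trivial
    have h1' : p + q = 0 := by simpa [L] using h1
    have h2' : I * p + -I * q = 0 := by simpa [L] using h2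
    have h3 : p - q = 0 := by
      have : I * (p - q) = 0 := by linear_combination h2'
      exact (mul_eq_zero.mp this).resolve_left I_ne_zero
    have hp : p = 0 := by linear_combination (h1' + h3) / 2
    have hq : q = 0 := by linear_combination (h1' - h3) / 2
    tauto
  have := MeasureTheory.Measure.addHaar_submodule MeasureTheory.volume (LinearMap.ker L) hne
  rw [MeasureTheory.ae_iff]
  convert this using 2
  ext z
  simp [L]

theorem exists_pencil_eig {V : Type*} [AddCommGroup V] [Module ℂ V] [FiniteDimensional ℂ V]
    [Nontrivial V] (M N : V →ₗ[ℂ] V) :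
    ∃ v : V, v ≠ 0 ∧ ∃ p q : ℂ, (p ≠ 0 ∨ q ≠ 0) ∧ p • M v + q • N v = 0 := by
  by_cases hM : Function.Injective M
  · let e := LinearEquiv.ofInjectiveEndo M hM
    obtain ⟨c, hc⟩ := Module.End.exists_eigenvalue (e.symm.toLinearMap ∘ₗ N)
    obtain ⟨v, hv⟩ := hc.exists_hasEigenvector
    refine ⟨v, hv.2, c, -1, Or.inr (by simp), ?_⟩
    have h1 : e.symm (N v) = c • v := hv.apply_eq_smul
    have h2 : N v = c • M v := by
      have := congrArg e h1
      rw [LinearEquiv.apply_symm_apply, map_smul] at this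
      exact this
    rw [h2]; simp
  · rw [← LinearMap.ker_eq_bot] at hM
    obtain ⟨v, hv, hv0⟩ := Submodule.exists_mem_ne_zero_of_ne_bot hM
    exact ⟨v, hv0, 1, 0, Or.inl one_ne_zero, by simpa using hv⟩

theorem exists_isEig (A : E →L[ℂ] E) (U : Submodule ℂ E) (hU : U ≠ ⊥) : ∃ v, IsEig A U v := by
  have : Nontrivial U := (Submodule.nontrivial_iff_ne_bot).2 hU
  let c : (E →L[ℂ] E) → (U →ₗ[ℂ] U) := fun B =>
    (U.orthogonalProjectionOnto : E →L[ℂ] U).toLinearMap ∘ₗ B.toLinearMap ∘ₗ U.subtype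
  have hc : ∀ B (v x : U), ⟪(c B v : E), (x : E)⟫_ℂ = ⟪B v, (x : E)⟫_ℂ := by
    intro B v x
    change ⟪((U.orthogonalProjectionOnto (B v) : U) : E), (x : E)⟫_ℂ = _
    rw [← Submodule.starProjection_apply, Submodule.inner_starProjection_left_eq_right,
      Submodule.starProjection_eq_self_iff.2 x.2]
  obtain ⟨v, hv, p, q, hpq, h⟩ := exists_pencil_eig (c A.adjoint) (c A)
  refine ⟨v, v.2, by simpa using hv, (starRingEnd ℂ) p, (starRingEnd ℂ) q, by simpa using hpq, ?_⟩
  intro x hx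
  have h1 := congrArg (fun w : U => ⟪(w : E), (x : E)⟫_ℂ) h
  simp only [Submodule.coe_add, Submodule.coe_smul, inner_add_left, inner_smul_left,
    Submodule.coe_zero, inner_zero_left] at h1
  rw [hc _ _ ⟨x, hx⟩, hc _ _ ⟨x, hx⟩, ContinuousLinearMap.adjoint_inner_left] at h1
  exact h1

theorem IsEig.struct {A : E →L[ℂ] E} {U : Submodule ℂ E} {v : E} (h : IsEig A U v) :
    ∃ (l : E →ₗ[ℂ] ℂ) (γ δ : ℂ), (γ ≠ 0 ∨ δ ≠ 0) ∧
      ∀ x ∈ U, ⟪v, A x⟫_ℂ = γ * l x ∧ ⟪A v, x⟫_ℂ = δ * l x := by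
  obtain ⟨hvU, hv0, p, q, hpq, h⟩ := h
  by_cases hp : p = 0
  · subst hp
    have hq : q ≠ 0 := by simpa using hpq
    refine ⟨(innerSL ℂ v ∘L A).toLinearMap, 1, 0, Or.inl one_ne_zero, fun x hx => ?_⟩
    have := h x hx
    simp [hq] at this
    simp [this]
  · refine ⟨(innerSL ℂ (A v)).toLinearMap, -q / p, 1, Or.inr one_ne_zero, fun x hx => ?_⟩
    have := h x hx
    refine ⟨?_, by simp⟩
    simp only [ContinuousLinearMap.coe_coe, innerSL_apply_apply]
    field_simp
    linear_combination this

theorem finrank_inf_ker_ge (W : Submodule ℂ E) (l : E →ₗ[ℂ] ℂ) :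
    Module.finrank ℂ W ≤ Module.finrank ℂ (W ⊓ LinearMap.ker l : Submodule ℂ E) + 1 := by
  have h1 := LinearMap.finrank_range_add_finrank_ker (l.domRestrict W)
  have h2 : Module.finrank ℂ (LinearMap.range (l.domRestrict W)) ≤ 1 := by
    simpa using Submodule.finrank_le (LinearMap.range (l.domRestrict W))
  have h3 : Module.finrank ℂ (LinearMap.ker (l.domRestrict W)) =
      Module.finrank ℂ (W ⊓ LinearMap.ker l : Submodule ℂ E) := by
    have : (W ⊓ LinearMap.ker l) = (LinearMap.ker (l.domRestrict W)).map W.subtype := by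
      ext x
      simp only [Submodule.mem_inf, LinearMap.mem_ker, Submodule.mem_map, Submodule.subtype_apply,
        LinearMap.domRestrict_apply]
      constructor
      · rintro ⟨a, b⟩; exact ⟨⟨x, a⟩, b, rfl⟩
      · rintro ⟨y, b, rfl⟩; exact ⟨y.2, b⟩
    rw [this]
    exact (Submodule.finrank_map_subtype_eq W _).symm
  omega

theorem psd_null {A : E →L[ℂ] E} {W : Submodule ℂ E} {z : ℂ}
    (hW : ∀ x ∈ W, 0 ≤ (z * ⟪x, A x⟫_ℂ).re) {v : E} (hv : v ∈ W) (hv0 : ⟪v, A v⟫_ℂ = 0)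
    {x : E} (hx : x ∈ W) : z * ⟪v, A x⟫_ℂ + (starRingEnd ℂ) z * ⟪A v, x⟫_ℂ = 0 := by
  set g := z * ⟪v, A x⟫_ℂ + (starRingEnd ℂ) z * ⟪A v, x⟫_ℂ with hg
  have key : ∀ s : ℝ, 0 ≤ (z * ⟪x, A x⟫_ℂ).re + s * normSq g := by
    intro s
    have h1 := hW (x + ((s : ℂ) * g) • v) (W.add_mem hx (W.smul_mem _ hv))
    have h2 : z * ⟪x + ((s : ℂ) * g) • v, A (x + ((s : ℂ) * g) • v)⟫_ℂ =
        z * ⟪x, A x⟫_ℂ + s * (z * g * ⟪x, A v⟫_ℂ + z * (starRingEnd ℂ) g * ⟪v, A x⟫_ℂ) := by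
      simp only [map_add, map_smul, inner_add_left, inner_add_right, inner_smul_left,
        inner_smul_right, hv0, map_mul, conj_ofReal]
      ring
    have h3 : (z * g * ⟪x, A v⟫_ℂ).re = ((starRingEnd ℂ) g * ((starRingEnd ℂ) z * ⟪A v, x⟫_ℂ)).re := by
      rw [← conj_re]
      congr 1
      simp only [map_mul, inner_conj_symm]
      ring
    rw [h2, add_re, re_ofReal_mul, add_re, h3, ← add_re,
      show (starRingEnd ℂ) g * ((starRingEnd ℂ) z * ⟪A v, x⟫_ℂ) + z * (starRingEnd ℂ) g * ⟪v, A x⟫_ℂ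
        = (starRingEnd ℂ) g * g by rw [hg]; ring, mul_comm, ← mul_comm g, mul_conj, ofReal_re,
        mul_comm] at h1
    exact h1
  by_contra hne
  have hpos : 0 < normSq g := normSq_pos.2 hne
  have := key (-((z * ⟪x, A x⟫_ℂ).re + 1) / normSq g)
  rw [div_mul_cancel₀ _ hpos.ne'] at this
  linarith

theorem neutral_step {A : E →L[ℂ] E} {U : Submodule ℂ E} {v : E} (h : IsEig A U v)
    (hv0 : ⟪v, A v⟫_ℂ = 0) (k : ℕ) (hP : HP A (k+1) U) :
    ∃ U' : Submodule ℂ E, U' < U ∧ HP A k U' ∧ v ∉ U' ∧ 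
      (∀ x ∈ U', ⟪v, A x⟫_ℂ = 0 ∧ ⟪x, A v⟫_ℂ = 0) := by
  obtain ⟨l, γ, δ, hγδ, hl⟩ := h.struct
  obtain ⟨hvU, hvne, -⟩ := h
  have hv0' : ⟪A v, v⟫_ℂ = 0 := by rw [← inner_conj_symm, hv0, map_zero]
  have hlv : l v = 0 := by
    have := hl v hvU
    rw [hv0, hv0'] at this
    rcases hγδ with h | h
    · exact (mul_eq_zero.mp this.1.symm).resolve_left h
    · exact (mul_eq_zero.mp this.2.symm).resolve_left h
  have hortho : ∀ x ∈ U ⊓ LinearMap.ker l, ⟪v, A x⟫_ℂ = 0 ∧ ⟪x, A v⟫_ℂ = 0 := by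
    rintro x ⟨hx, hxl⟩
    have hxl' : l x = 0 := hxl
    have := hl x hx
    rw [hxl', mul_zero, mul_zero] at this
    exact ⟨this.1, by rw [← inner_conj_symm, this.2, map_zero]⟩
  set L : Submodule ℂ E := Submodule.span ℂ {v} with hL
  have hvL : v ∈ L := Submodule.mem_span_singleton_self v
  have hvLo : v ∉ Lᗮ := by
    intro h
    exact hvne (inner_self_eq_zero.1 (Submodule.inner_right_of_mem_orthogonal hvL h))
  refine ⟨(U ⊓ LinearMap.ker l) ⊓ Lᗮ, ?_, ?_, fun h => hvLo h.2, fun x hx => hortho x hx.1⟩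
  · refine lt_of_le_of_ne (fun x hx => hx.1.1) fun he => ?_
    exact hvLo ((he.symm ▸ hvU : v ∈ (U ⊓ LinearMap.ker l) ⊓ Lᗮ)).2
  filter_upwards [hP, ae_comb_ne γ δ hγδ] with z ⟨W, hWU, hWk, hW⟩ hz
  set π : E →ₗ[ℂ] E := (Lᗮ.starProjection).toLinearMap with hπ
  have hπx : ∀ x, ∃ c : ℂ, π x = x + c • v := by
    intro x
    have h1 : π x = x - L.starProjection x := by
      rw [hπ]; exact Submodule.starProjection_orthogonal_val x
    obtain ⟨c, hc⟩ := Submodule.mem_span_singleton.1 (Submodule.starProjection_apply_mem L x)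
    exact ⟨-c, by rw [h1, ← hc]; simp [sub_eq_add_neg]⟩
  -- general claim
  have claim : ∀ W' : Submodule ℂ E, W' ≤ W → W' ≤ LinearMap.ker l →
      k ≤ Module.finrank ℂ (W'.map π) → ∃ W : Submodule ℂ E, W ≤ (U ⊓ LinearMap.ker l) ⊓ Lᗮ ∧
        k ≤ Module.finrank ℂ W ∧ ∀ x ∈ W, 0 ≤ (z * ⟪x, A x⟫_ℂ).re := by
    intro W' h1 h2 h3
    refine ⟨W'.map π, ?_, h3, ?_⟩
    · rintro _ ⟨x, hx, rfl⟩
      refine ⟨?_, Submodule.starProjection_apply_mem _ _⟩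
      obtain ⟨c, hc⟩ := hπx x
      rw [hc]
      exact Submodule.add_mem _ ⟨hWU (h1 hx), h2 hx⟩ (Submodule.smul_mem _ _ ⟨hvU, hlv⟩)
    · rintro _ ⟨x, hx, rfl⟩
      obtain ⟨c, hc⟩ := hπx x
      have := hortho x ⟨hWU (h1 hx), h2 hx⟩
      have h4 : ⟪π x, A (π x)⟫_ℂ = ⟪x, A x⟫_ℂ := by
        rw [hc]
        simp only [map_add, map_smul, inner_add_left, inner_add_right, inner_smul_left,
        inner_smul_right, hv0, this.1, this.2]
        ring
      rw [h4]
      exact hW x (h1 hx)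
  have hkerπ : LinearMap.ker π = L := by
    rw [hπ]
    ext x
    rw [LinearMap.mem_ker]
    change Lᗮ.starProjection x = 0 ↔ _
    rw [Submodule.starProjection_apply_eq_zero_iff, Submodule.orthogonal_orthogonal]
  have hrk : ∀ W' : Submodule ℂ E, Module.finrank ℂ (W'.map π) +
      Module.finrank ℂ (W' ⊓ L : Submodule ℂ E) = Module.finrank ℂ W' := by
    intro W'
    have := LinearMap.finrank_range_add_finrank_ker (π.domRestrict W')
    rw [← this, LinearMap.range_domRestrict]
    congr 1
    have : (W' ⊓ L) = (LinearMap.ker (π.domRestrict W')).map W'.subtype := by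
      rw [← hkerπ]
      ext x
      simp only [Submodule.mem_inf, LinearMap.mem_ker, Submodule.mem_map, Submodule.subtype_apply,
        LinearMap.domRestrict_apply]
      constructor
      · rintro ⟨a, b⟩; exact ⟨⟨x, a⟩, b, rfl⟩
      · rintro ⟨y, b, rfl⟩; exact ⟨y.2, b⟩
    rw [this]
    exact (Submodule.finrank_map_subtype_eq W' _)
  by_cases hvW : v ∈ W
  · refine claim W le_rfl ?_ ?_
    · intro x hx
      have h1 := psd_null hW hvW hv0 hx
      have h2 := hl x (hWU hx)
      rw [h2.1, h2.2] at h1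
      have h3 : (z * γ + (starRingEnd ℂ) z * δ) * l x = 0 := by linear_combination h1
      exact (mul_eq_zero.mp h3).resolve_left hz
    · have h1 := hrk W
      have h2 : Module.finrank ℂ (W ⊓ L : Submodule ℂ E) ≤ 1 :=
        (Submodule.finrank_mono inf_le_right).trans (finrank_span_singleton hvne).le
      omega
  · refine claim (W ⊓ LinearMap.ker l) inf_le_left inf_le_right ?_
    have h1 := hrk (W ⊓ LinearMap.ker l)
    have h2 := finrank_inf_ker_ge W l
    have h3 : (W ⊓ LinearMap.ker l) ⊓ L = ⊥ := by
      rw [eq_bot_iff]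
      rintro x ⟨⟨hx, -⟩, hxL⟩
      obtain ⟨c, rfl⟩ := Submodule.mem_span_singleton.1 hxL
      by_cases hc : c = 0
      · simp [hc]
      · exact absurd ((Submodule.smul_mem_iff _ hc).1 hx) hvW
    rw [h3, finrank_bot] at h1
    omega

theorem exists_diag (A : E →L[ℂ] E) : ∀ (m : ℕ) (U : Submodule ℂ E), Module.finrank ℂ U = m →
    (∀ v, IsEig A U v → ⟪v, A v⟫_ℂ ≠ 0) →
    ∃ e : Fin m → E, (∀ i, e i ∈ U) ∧ U ≤ Submodule.span ℂ (Set.range e) ∧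
      (∀ i, ⟪e i, A (e i)⟫_ℂ ≠ 0) ∧ (∀ i j, i ≠ j → ⟪e i, A (e j)⟫_ℂ = 0) := by
  intro m
  induction m with
  | zero =>
    intro U hU _
    have : U = ⊥ := Submodule.finrank_eq_zero.1 hU
    exact ⟨Fin.elim0, fun i => i.elim0, by simp [this], fun i => i.elim0, fun i => i.elim0⟩
  | succ m ih =>
    intro U hU hn
    have hUb : U ≠ ⊥ := by rintro rfl; simp at hU
    obtain ⟨v, hv⟩ := exists_isEig A U hUb
    have hv0 := hn v hv
    obtain ⟨l, γ, δ, hγδ, hl⟩ := hv.struct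
    obtain ⟨hvU, hvne, -⟩ := hv
    have hlv : l v ≠ 0 := by
      intro h0
      apply hv0
      rw [(hl v hvU).1, h0, mul_zero]
    have hortho : ∀ x ∈ U ⊓ LinearMap.ker l, ⟪v, A x⟫_ℂ = 0 ∧ ⟪A v, x⟫_ℂ = 0 := by
      rintro x ⟨hx, hxl⟩
      have hxl' : l x = 0 := hxl
      have := hl x hx
      rw [hxl', mul_zero, mul_zero] at this
      exact this
    have hdec : ∀ x ∈ U, ∃ c : ℂ, ∃ y ∈ U ⊓ LinearMap.ker l, x = c • v + y := by
      intro x hx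
      refine ⟨l x / l v, x - (l x / l v) • v, ⟨U.sub_mem hx (U.smul_mem _ hvU), ?_⟩, by abel⟩
      simp [LinearMap.mem_ker, div_mul_cancel₀ _ hlv]
    have hfr : Module.finrank ℂ (U ⊓ LinearMap.ker l : Submodule ℂ E) = m := by
      have h1 := finrank_inf_ker_ge U l
      have h2 : Module.finrank ℂ (U ⊓ LinearMap.ker l : Submodule ℂ E) < Module.finrank ℂ U := by
        refine Submodule.finrank_lt_finrank_of_lt (lt_of_le_of_ne inf_le_left fun he => ?_)
        exact hlv ((he.symm ▸ hvU : v ∈ U ⊓ LinearMap.ker l)).2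
      omega
    obtain ⟨e, he1, he2, he3, he4⟩ := ih (U ⊓ LinearMap.ker l) hfr (by
      rintro w ⟨hwU, hw0, p, q, hpq, hw⟩
      refine hn w ⟨hwU.1, hw0, p, q, hpq, fun x hx => ?_⟩
      obtain ⟨c, y, hy, rfl⟩ := hdec x hx
      have h1 := hortho w hwU
      have h2 : ⟪w, A v⟫_ℂ = 0 := by rw [← inner_conj_symm, h1.2, map_zero]
      have h3 : ⟪A w, v⟫_ℂ = 0 := by rw [← inner_conj_symm, h1.1, map_zero]
      have h4 := hw y hy
      simp only [map_add, map_smul, inner_add_right, inner_smul_right, h2, h3]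
      linear_combination h4)
    refine ⟨Fin.cons v e, ?_, ?_, ?_, ?_⟩
    · intro i
      refine Fin.cases hvU (fun i => (he1 i).1) i
    · intro x hx
      obtain ⟨c, y, hy, rfl⟩ := hdec x hx
      rw [Fin.range_cons]
      refine Submodule.add_mem _ (Submodule.smul_mem _ _ (Submodule.subset_span (by simp))) ?_
      exact Submodule.span_mono (Set.subset_insert _ _) (he2 hy)
    · intro i
      refine Fin.cases hv0 (fun i => ?_) i
      simpa using he3 i
    · intro i j
      refine Fin.cases ?_ (fun i => ?_) i <;> refine Fin.cases ?_ (fun j => ?_) j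
      · simp
      · intro _; simpa using (hortho _ (he1 j)).1
      · intro _
        simp only [Fin.cons_succ, Fin.cons_zero]
        rw [← inner_conj_symm, (hortho _ (he1 i)).2, map_zero]
      · intro h
        simpa using he4 i j (by simpa using h)
end LA

theorem fp_secular {p : ℕ} (τ : Fin (p+1) → ℝ) (ν : Fin p → ℝ) (hτ : StrictMono τ)
    (i : Fin p) (hne : ∀ l, ν i ≠ τ l) :
    ∑ l, (∏ j : Fin p, (τ l - ν j) / (τ l - τ (l.succAbove j))) * (ν i - τ l)⁻¹ = 0 := by
  have hinj : Set.InjOn τ ((Finset.univ : Finset (Fin (p+1))) : Set (Fin (p+1))) := hτ.injective.injOn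
  have h1 := Lagrange.eq_interpolate (s := Finset.univ) (v := τ)
    (f := Lagrange.nodal Finset.univ ν) hinj (by
      rw [Lagrange.degree_nodal]; simp; exact_mod_cast Nat.lt_succ_self p)
  have h2 := congrArg (Polynomial.eval (ν i)) h1
  rw [Lagrange.eval_nodal_at_node (Finset.mem_univ i),
    Lagrange.eval_interpolate_not_at_node _ (fun l _ => hne l)] at h2
  have h3 : Polynomial.eval (ν i) (Lagrange.nodal Finset.univ τ) ≠ 0 :=
    Lagrange.eval_nodal_not_at_node (fun l _ => hne l)
  have h4 := (mul_eq_zero.mp h2.symm).resolve_left h3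
  rw [← h4]
  refine Finset.sum_congr rfl fun l _ => ?_
  rw [Lagrange.eval_nodal, Finset.prod_div_distrib, Lagrange.nodalWeight, Finset.prod_inv_distrib]
  have : ∏ j ∈ Finset.univ.erase l, (τ l - τ j) = ∏ j : Fin p, (τ l - τ (l.succAbove j)) := by
    have := Fin.succAbove_ne l
    rw [show Finset.univ.erase l = Finset.univ.map (Fin.succAboveEmb l) from ?_]
    · simp
    · ext j; simp [Fin.exists_succAbove_eq_iff]
  rw [this]
  ring

theorem fp_strict {p : ℕ} (τ : Fin (p+1) → ℝ) (ν : Fin p → ℝ)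
    (h1 : ∀ i, τ i.castSucc < ν i) (h2 : ∀ i, ν i < τ i.succ) :
    ∃ Q : Matrix (Fin (p+1)) (Fin p) ℝ, Qᵀ * Q = 1 ∧
      Qᵀ * Matrix.diagonal τ * Q = Matrix.diagonal ν := by
  have hτ : StrictMono τ := Fin.strictMono_iff_lt_succ.2 fun i => (h1 i).trans (h2 i)
  have hν : StrictMono ν := by
    intro i j hij
    calc ν i < τ i.succ := h2 i
      _ ≤ τ j.castSucc := hτ.monotone (by simpa [Fin.le_def] using hij)
      _ < ν j := h1 j
  have hlow : ∀ (l : Fin (p+1)) (i : Fin p), l ≤ i.castSucc → τ l < ν i := fun l i h =>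
    (hτ.monotone h).trans_lt (h1 i)
  have hhigh : ∀ (l : Fin (p+1)) (i : Fin p), i.castSucc < l → ν i < τ l := fun l i h =>
    (h2 i).trans_le (hτ.monotone (by simpa [Fin.le_def, Fin.lt_def] using h))
  have hne : ∀ i l, ν i ≠ τ l := by
    intro i l
    rcases le_or_gt l i.castSucc with h | h
    · exact (hlow l i h).ne'
    · exact (hhigh l i h).ne
  set c : Fin (p+1) → ℝ := fun l => ∏ j : Fin p, (τ l - ν j) / (τ l - τ (l.succAbove j)) with hc
  have hcpos : ∀ l, 0 < c l := by
    intro l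
    refine Finset.prod_pos fun j _ => ?_
    rcases le_or_gt l j.castSucc with h | h
    · rw [Fin.succAbove_of_le_castSucc _ _ h]
      exact div_pos_of_neg_of_neg (sub_neg.2 (hlow l j h)) (sub_neg.2 ((hlow l j h).trans (h2 j)))
    · rw [Fin.succAbove_of_castSucc_lt _ _ h]
      exact div_pos (sub_pos.2 (hhigh l j h)) (sub_pos.2 (hτ h))
  have hsec : ∀ i, ∑ l, c l * (ν i - τ l)⁻¹ = 0 := fun i => fp_secular τ ν hτ i (hne i)
  set N : Fin p → ℝ := fun i => ∑ l, c l * ((ν i - τ l)⁻¹ * (ν i - τ l)⁻¹) with hN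
  have hNpos : ∀ i, 0 < N i := by
    intro i
    refine Finset.sum_pos (fun l _ => ?_) ⟨0, Finset.mem_univ _⟩
    exact mul_pos (hcpos l) (mul_self_pos.2 (inv_ne_zero (sub_ne_zero.2 (hne i l))))
  have horth : ∀ i j, i ≠ j → ∑ l, c l * ((ν i - τ l)⁻¹ * (ν j - τ l)⁻¹) = 0 := by
    intro i j hij
    have hd : ν j - ν i ≠ 0 := sub_ne_zero.2 (hν.injective.ne hij.symm)
    have : (ν j - ν i) * ∑ l, c l * ((ν i - τ l)⁻¹ * (ν j - τ l)⁻¹) = 0 := by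
      calc _ = ∑ l, c l * (ν i - τ l)⁻¹ - ∑ l, c l * (ν j - τ l)⁻¹ := by
            rw [Finset.mul_sum, ← Finset.sum_sub_distrib]
            refine Finset.sum_congr rfl fun l _ => ?_
            have := sub_ne_zero.2 (hne i l)
            have := sub_ne_zero.2 (hne j l)
            field_simp
            ring
        _ = 0 := by rw [hsec, hsec, sub_zero]
    exact (mul_eq_zero.mp this).resolve_left hd
  set Q : Matrix (Fin (p+1)) (Fin p) ℝ :=
    Matrix.of fun l i => Real.sqrt (c l) * (ν i - τ l)⁻¹ * (Real.sqrt (N i))⁻¹ with hQ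
  have hprod : ∀ l i j, Q l i * Q l j = (Real.sqrt (N i))⁻¹ * (Real.sqrt (N j))⁻¹ *
      (c l * ((ν i - τ l)⁻¹ * (ν j - τ l)⁻¹)) := by
    intro l i j
    have := Real.mul_self_sqrt (hcpos l).le
    simp only [hQ, Matrix.of_apply]
    linear_combination ((Real.sqrt (N i))⁻¹ * (Real.sqrt (N j))⁻¹ *
      ((ν i - τ l)⁻¹ * (ν j - τ l)⁻¹)) * this
  have hQQ : ∀ i j, ∑ l, Q l i * Q l j = (1 : Matrix (Fin p) (Fin p) ℝ) i j := by
    intro i j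
    simp_rw [hprod]
    rw [← Finset.mul_sum]
    by_cases hij : i = j
    · subst hij
      rw [Matrix.one_apply_eq]
      change (Real.sqrt (N i))⁻¹ * (Real.sqrt (N i))⁻¹ * N i = 1
      rw [← mul_inv, Real.mul_self_sqrt (hNpos i).le, inv_mul_cancel₀ (hNpos i).ne']
    · rw [horth i j hij, Matrix.one_apply_ne hij, mul_zero]
  refine ⟨Q, ?_, ?_⟩
  · ext i j
    rw [Matrix.mul_apply, ← hQQ]
    rfl
  · ext i j
    rw [Matrix.mul_apply]
    have e1 : ∀ l, (Qᵀ * Matrix.diagonal τ) i l * Q l j =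
        ν j * (Q l i * Q l j) - (Real.sqrt (N i))⁻¹ * (Real.sqrt (N j))⁻¹ * (c l * (ν i - τ l)⁻¹) := by
      intro l
      rw [Matrix.mul_diagonal, Matrix.transpose_apply,
        show Q l i * τ l * Q l j = τ l * (Q l i * Q l j) by ring, hprod]
      have := sub_ne_zero.2 (hne j l)
      field_simp
      ring
    simp_rw [e1]
    rw [Finset.sum_sub_distrib, ← Finset.mul_sum, ← Finset.mul_sum, hsec, hQQ, mul_zero, sub_zero]
    by_cases hij : i = j
    · subst hij; simp
    · simp [hij]

theorem fp_weak {p : ℕ} (τ : Fin (p+1) → ℝ) (ν : Fin p → ℝ)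
    (h1 : ∀ i, τ i.castSucc ≤ ν i) (h2 : ∀ i, ν i ≤ τ i.succ) :
    ∃ Q : Matrix (Fin (p+1)) (Fin p) ℝ, Qᵀ * Q = 1 ∧
      Qᵀ * Matrix.diagonal τ * Q = Matrix.diagonal ν := by
  set ε : ℕ → ℝ := fun N => 1 / ((N : ℝ) + 1) with hε
  have hεpos : ∀ N, 0 < ε N := fun N => Nat.one_div_pos_of_nat
  have hεlim : Filter.Tendsto ε Filter.atTop (nhds 0) := tendsto_one_div_add_atTop_nhds_zero_nat
  set τ' : ℕ → Fin (p+1) → ℝ := fun N l => τ l + 2 * (l : ℕ) * ε N with hτ'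
  set ν' : ℕ → Fin p → ℝ := fun N i => ν i + (2 * (i : ℕ) + 1) * ε N with hν'
  have key : ∀ N, ∃ Q : Matrix (Fin (p+1)) (Fin p) ℝ, Qᵀ * Q = 1 ∧
      Qᵀ * Matrix.diagonal (τ' N) * Q = Matrix.diagonal (ν' N) := by
    intro N
    refine fp_strict _ _ (fun i => ?_) (fun i => ?_)
    · have := h1 i; have := hεpos N; simp only [hτ', hν', Fin.val_castSucc]; nlinarith
    · have := h2 i; have := hεpos N; simp only [hτ', hν', Fin.val_succ]; push_cast; nlinarith
  choose Q hQ1 hQ2 using key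
  have hK : IsCompact (Set.pi Set.univ fun _ : Fin (p+1) => Set.pi Set.univ fun _ : Fin p =>
      Set.Icc (-1 : ℝ) 1) := isCompact_univ_pi fun _ => isCompact_univ_pi fun _ => isCompact_Icc
  have hmem : ∀ N, (Q N : Fin (p+1) → Fin p → ℝ) ∈ (Set.pi Set.univ fun _ : Fin (p+1) =>
      Set.pi Set.univ fun _ : Fin p => Set.Icc (-1 : ℝ) 1) := by
    intro N l _ i _
    have h := congrFun (congrFun (hQ1 N) i) i
    rw [Matrix.mul_apply, Matrix.one_apply_eq] at h
    have h' : Q N l i * Q N l i ≤ 1 := by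
      rw [← h]
      exact Finset.single_le_sum (f := fun l => (Q N)ᵀ i l * Q N l i)
        (fun l _ => mul_self_nonneg (Q N l i)) (Finset.mem_univ l)
    exact ⟨by nlinarith, by nlinarith⟩
  obtain ⟨Q0, -, φ, hφ, hlim⟩ := hK.tendsto_subseq hmem
  have hlim' : Filter.Tendsto (fun N => Q (φ N)) Filter.atTop (nhds (Matrix.of Q0)) := hlim
  have hε2 := hεlim.comp hφ.tendsto_atTop
  have hτl : Filter.Tendsto (fun N => Matrix.diagonal (τ' (φ N))) Filter.atTop
      (nhds (Matrix.diagonal τ)) := by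
    refine ((continuous_id.matrix_diagonal).tendsto τ).comp (tendsto_pi_nhds.2 fun l => ?_)
    simpa using (tendsto_const_nhds (x := τ l)).add (hε2.const_mul (2 * ((l : ℕ) : ℝ)))
  have hνl : Filter.Tendsto (fun N => Matrix.diagonal (ν' (φ N))) Filter.atTop
      (nhds (Matrix.diagonal ν)) := by
    refine ((continuous_id.matrix_diagonal).tendsto ν).comp (tendsto_pi_nhds.2 fun l => ?_)
    simpa using (tendsto_const_nhds (x := ν l)).add (hε2.const_mul (2 * ((l : ℕ) : ℝ) + 1))
  have hT : Filter.Tendsto (fun N => (Q (φ N))ᵀ) Filter.atTop (nhds (Matrix.of Q0)ᵀ) :=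
    ((continuous_id.matrix_transpose).tendsto _).comp hlim'
  have mulT : ∀ {a b c : ℕ} {F : ℕ → Matrix (Fin a) (Fin b) ℝ} {G : ℕ → Matrix (Fin b) (Fin c) ℝ}
      {F0 G0}, Filter.Tendsto F Filter.atTop (nhds F0) → Filter.Tendsto G Filter.atTop (nhds G0) →
      Filter.Tendsto (fun N => F N * G N) Filter.atTop (nhds (F0 * G0)) := by
    intro a b c F G F0 G0 hF hG
    exact (((continuous_fst.matrix_mul continuous_snd).tendsto (F0, G0))).comp (hF.prodMk_nhds hG)
  refine ⟨Matrix.of Q0, ?_, ?_⟩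
  · refine tendsto_nhds_unique (mulT hT hlim') ?_
    simp [hQ1]
  · refine tendsto_nhds_unique (mulT (mulT hT hτl) hlim') ?_
    simpa [hQ2] using hνl

theorem fan_pall {k : ℕ} (μ : Fin k → ℝ) (hμ : Monotone μ) : ∀ (d : ℕ) (τ : Fin (k+d) → ℝ),
    Monotone τ → (∀ i, τ (Fin.castAdd d i) ≤ μ i) → (∀ i, μ i ≤ τ (Fin.addNat i d)) →
    ∃ Q : Matrix (Fin (k+d)) (Fin k) ℝ, Qᵀ * Q = 1 ∧
      Qᵀ * Matrix.diagonal τ * Q = Matrix.diagonal μ := by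
  intro d
  induction d with
  | zero =>
    intro τ _ h1 h2
    refine ⟨(1 : Matrix (Fin k) (Fin k) ℝ), by simp, ?_⟩
    have : τ = μ := funext fun i => le_antisymm (h1 i) (h2 i)
    subst this
    erw [Matrix.transpose_one, Matrix.one_mul, Matrix.mul_one]
  | succ d ih =>
    intro τ hτ h1 h2
    set ν : Fin (k+d) → ℝ := fun i => if h : d ≤ i then
      max (τ (Fin.castSucc i)) (μ ⟨i - d, by omega⟩) else τ (Fin.castSucc i) with hν
    have hν1 : ∀ i, τ (Fin.castSucc i) ≤ ν i := by
      intro i; simp only [hν]; split_ifs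
      · exact le_max_left _ _
      · exact le_rfl
    have hν2 : ∀ i, ν i ≤ τ (Fin.succ i) := by
      intro i; simp only [hν]
      have h0 : τ (Fin.castSucc i) ≤ τ (Fin.succ i) := hτ (Fin.castSucc_lt_succ).le
      split_ifs with h
      · refine max_le h0 ((h2 _).trans (le_of_eq ?_))
        congr 1
        ext
        simp; omega
      · exact h0
    have hνm : Monotone ν := by
      intro i j hij
      have h0 : τ (Fin.castSucc i) ≤ τ (Fin.castSucc j) := hτ (by simpa using hij)
      have hij' : (i : ℕ) ≤ j := hij
      simp only [hν]
      split_ifs with h h'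
      · exact max_le_max h0 (hμ (by rw [Fin.mk_le_mk]; omega))
      · omega
      · exact h0.trans (le_max_left _ _)
      · exact h0
    obtain ⟨Q2, hQ2, hQ2'⟩ := ih ν hνm (by
      intro i
      have h0 := h1 i
      simp only [hν]
      split_ifs with h
      · exact max_le h0 (hμ (by rw [Fin.le_def]; simp))
      · exact h0) (by
      intro i
      simp only [hν]
      rw [dif_pos (by simp)]
      refine le_trans (le_of_eq ?_) (le_max_right _ _)
      congr 1
      ext; simp)
    obtain ⟨Q1, hQ1, hQ1'⟩ := fp_weak (p := k + d) τ ν hν1 hν2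
    refine ⟨Q1 * Q2, ?_, ?_⟩
    · rw [Matrix.transpose_mul, Matrix.mul_assoc, ← Matrix.mul_assoc Q1ᵀ, hQ1, Matrix.one_mul, hQ2]
    · rw [Matrix.transpose_mul, ← hQ2', ← hQ1']
      simp only [Matrix.mul_assoc]

theorem sorted_enum {m : ℕ} (t : Fin m → ℝ) (S : Finset (Fin m)) {p : ℕ} (hp : S.card = p) :
    ∃ α : Fin p → Fin m, Function.Injective α ∧ (∀ i, i ∈ S ↔ ∃ l, α l = i) ∧
      Monotone (t ∘ α) := by
  let e := S.equivFinOfCardEq hp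
  let f : Fin p → ℝ := fun l => t (e.symm l)
  refine ⟨fun l => e.symm (Tuple.sort f l), ?_, ?_, Tuple.monotone_sort f⟩
  · intro a b hab
    exact (Tuple.sort f).injective (e.symm.injective (Subtype.ext hab))
  · intro i
    constructor
    · intro hi
      exact ⟨(Tuple.sort f).symm (e ⟨i, hi⟩), by simp⟩
    · rintro ⟨l, rfl⟩
      exact (e.symm _).2

theorem interlace {m : ℕ} (h t : Fin m → ℝ) (k : ℕ) (hh : ∀ i, h i ≠ 0)
    (hk : (Finset.univ.filter fun i => h i < 0).card = k)
    (hA : ∀ s, (∀ i, t i ≠ s) → k ≤ (Finset.univ.filter fun i => 0 < h i * (s - t i)).card ∧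
      k ≤ (Finset.univ.filter fun i => 0 < -(h i * (s - t i))).card) :
    ∃ (d : ℕ) (α : Fin (k+d) → Fin m) (β : Fin k → Fin m), Function.Injective α ∧
      Function.Injective β ∧ (∀ l, 0 < h (α l)) ∧ (∀ j, h (β j) < 0) ∧ Monotone (t ∘ α) ∧
      Monotone (t ∘ β) ∧ (∀ i, t (α (Fin.castAdd d i)) ≤ t (β i)) ∧
      (∀ i, t (β i) ≤ t (α (Fin.addNat i d))) := by
  have hge : k ≤ (Finset.univ.filter fun i => 0 < h i).card := by
    obtain ⟨b, hb⟩ := (Set.finite_range t).bddAbove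
    have hb' : ∀ i, t i < b + 1 := fun i => (hb ⟨i, rfl⟩).trans_lt (lt_add_one b)
    have := (hA (b + 1) fun i => (hb' i).ne).1
    refine this.trans (Finset.card_le_card fun i hi => ?_)
    simp only [Finset.mem_filter, Finset.mem_univ, true_and] at hi ⊢
    exact (mul_pos_iff_of_pos_right (sub_pos.2 (hb' i))).1 hi
  obtain ⟨d, hd⟩ := Nat.exists_eq_add_of_le hge
  obtain ⟨α, hα1, hα2, hα3⟩ := sorted_enum t _ hd
  obtain ⟨β, hβ1, hβ2, hβ3⟩ := sorted_enum t _ hk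
  simp only [Finset.mem_filter, Finset.mem_univ, true_and] at hα2 hβ2
  have hαp : ∀ l, 0 < h (α l) := fun l => (hα2 _).2 ⟨l, rfl⟩
  have hβn : ∀ l, h (β l) < 0 := fun l => (hβ2 _).2 ⟨l, rfl⟩
  have hbetween : ∀ a b : ℝ, a < b → ∃ s, a < s ∧ s < b ∧ ∀ i, t i ≠ s := by
    intro a b hab
    obtain ⟨s, hs, hs'⟩ := ((Set.Ioo_infinite hab).sdiff (Set.finite_range t)).nonempty
    exact ⟨s, hs.1, hs.2, fun i hi => hs' ⟨i, hi⟩⟩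
  refine ⟨d, α, β, hα1, hβ1, hαp, hβn, hα3, hβ3, ?_, ?_⟩
  · intro i
    by_contra! hlt
    obtain ⟨s, hs1, hs2, hs⟩ := hbetween _ _ hlt
    have h1 := (hA s hs).1
    have h2 : (Finset.univ.filter fun i => 0 < h i * (s - t i)) ⊆
        (Finset.Iio (Fin.castAdd d i)).image α ∪ (Finset.Ioi i).image β := by
      intro x hx
      simp only [Finset.mem_filter, Finset.mem_univ, true_and] at hx
      rcases lt_or_gt_of_ne (hh x) with hx' | hx'
      · obtain ⟨j, rfl⟩ := (hβ2 x).1 hx'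
        refine Finset.mem_union_right _ (Finset.mem_image_of_mem _ (Finset.mem_Ioi.2 ?_))
        by_contra! hle
        have : t (β j) ≤ t (β i) := hβ3 hle
        nlinarith
      · obtain ⟨j, rfl⟩ := (hα2 x).1 hx'
        refine Finset.mem_union_left _ (Finset.mem_image_of_mem _ (Finset.mem_Iio.2 ?_))
        by_contra! hle
        have : t (α (Fin.castAdd d i)) ≤ t (α j) := hα3 hle
        nlinarith
    have h3 := (Finset.card_le_card h2).trans (Finset.card_union_le _ _)
    rw [Finset.card_image_of_injective _ hα1, Finset.card_image_of_injective _ hβ1,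
      Fin.card_Iio, Fin.card_Ioi, Fin.val_castAdd] at h3
    have := i.2
    omega
  · intro i
    by_contra! hlt
    obtain ⟨s, hs1, hs2, hs⟩ := hbetween _ _ hlt
    have h1 := (hA s hs).2
    have h2 : (Finset.univ.filter fun i => 0 < -(h i * (s - t i))) ⊆
        (Finset.Ioi (Fin.addNat i d)).image α ∪ (Finset.Iio i).image β := by
      intro x hx
      simp only [Finset.mem_filter, Finset.mem_univ, true_and] at hx
      rcases lt_or_gt_of_ne (hh x) with hx' | hx'
      · obtain ⟨j, rfl⟩ := (hβ2 x).1 hx'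
        refine Finset.mem_union_right _ (Finset.mem_image_of_mem _ (Finset.mem_Iio.2 ?_))
        by_contra! hle
        have : t (β i) ≤ t (β j) := hβ3 hle
        nlinarith
      · obtain ⟨j, rfl⟩ := (hα2 x).1 hx'
        refine Finset.mem_union_left _ (Finset.mem_image_of_mem _ (Finset.mem_Ioi.2 ?_))
        by_contra! hle
        have : t (α j) ≤ t (α (Fin.addNat i d)) := hα3 hle
        nlinarith
    have h3 := (Finset.card_le_card h2).trans (Finset.card_union_le _ _)
    rw [Finset.card_image_of_injective _ hα1, Finset.card_image_of_injective _ hβ1,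
      Fin.card_Iio, Fin.card_Ioi, Fin.val_addNat] at h3
    have := i.2
    omega

section Diag
variable {E : Type*} [NormedAddCommGroup E] [InnerProductSpace ℂ E] [FiniteDimensional ℂ E]

theorem neutral_of_isometry {A : E →L[ℂ] E} {p k : ℕ} (f : Fin p → E) (g : Fin k → E)
    (τ : Fin p → ℝ) (μ : Fin k → ℝ) (c : ℂ) (hc : c ≠ 0)
    (hff : ∀ i j, ⟪f i, A (f j)⟫_ℂ = if i = j then c * (1 + τ i * I) else 0)
    (hgg : ∀ i j, ⟪g i, A (g j)⟫_ℂ = if i = j then -(c * (1 + μ i * I)) else 0)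
    (hfg : ∀ i j, ⟪f i, A (g j)⟫_ℂ = 0) (hgf : ∀ i j, ⟪g i, A (f j)⟫_ℂ = 0)
    (Q : Matrix (Fin p) (Fin k) ℝ) (hQ : Qᵀ * Q = 1)
    (hQ' : Qᵀ * Matrix.diagonal τ * Q = Matrix.diagonal μ)
    (U : Submodule ℂ E) (hf : ∀ i, f i ∈ U) (hg : ∀ i, g i ∈ U) :
    ∃ V : Submodule ℂ E, V ≤ U ∧ k ≤ Module.finrank ℂ V ∧ ∀ x ∈ V, ⟪x, A x⟫_ℂ = 0 := by
  set y : Fin k → E := fun j => g j + ∑ l, (Q l j : ℂ) • f l with hy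
  have hgy : ∀ i j, ⟪g i, A (y j)⟫_ℂ = if i = j then -(c * (1 + μ i * I)) else 0 := by
    intro i j
    simp only [hy, map_add, map_sum, map_smul, inner_add_right, inner_sum, inner_smul_right, hgg,
      hgf]
    simp
  have hyy : ∀ i j, ⟪y i, A (y j)⟫_ℂ = 0 := by
    intro i j
    have h0 : ⟪y i, A (y j)⟫_ℂ = ⟪g i, A (y j)⟫_ℂ + ∑ l, (Q l i : ℂ) * ⟪f l, A (y j)⟫_ℂ := by
      conv_lhs => rw [hy]
      simp only [inner_add_left, sum_inner, inner_smul_left, conj_ofReal]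
      rfl
    have h1 : ∀ l, ⟪f l, A (y j)⟫_ℂ = (Q l j : ℂ) * (c * (1 + τ l * I)) := by
      intro l
      simp only [hy, map_add, map_sum, map_smul, inner_add_right, inner_sum, inner_smul_right, hff,
        hfg]
      simp
    have e1 : ∑ l, (Q l i : ℂ) * (Q l j : ℂ) = if i = j then 1 else 0 := by
      have := congrFun (congrFun hQ i) j
      rw [Matrix.mul_apply, Matrix.one_apply] at this
      simp only [Matrix.transpose_apply] at this
      have h := congrArg (fun x : ℝ => (x : ℂ)) this
      push_cast at h
      rw [h]; split_ifs <;> simp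
    have e2 : ∑ l, (Q l i : ℂ) * (τ l : ℂ) * (Q l j : ℂ) = if i = j then (μ i : ℂ) else 0 := by
      have := congrFun (congrFun hQ' i) j
      rw [Matrix.mul_apply, Matrix.diagonal_apply] at this
      simp only [Matrix.mul_diagonal, Matrix.transpose_apply] at this
      have h := congrArg (fun x : ℝ => (x : ℂ)) this
      push_cast at h
      rw [h]; split_ifs <;> simp
    have h2 : ∑ l, (Q l i : ℂ) * ⟪f l, A (y j)⟫_ℂ = c * (∑ l, (Q l i : ℂ) * (Q l j : ℂ)) +
        c * I * (∑ l, (Q l i : ℂ) * (τ l : ℂ) * (Q l j : ℂ)) := by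
      rw [Finset.mul_sum, Finset.mul_sum, ← Finset.sum_add_distrib]
      refine Finset.sum_congr rfl fun l _ => ?_
      rw [h1]; ring
    rw [h0, h2, e1, e2, hgy]
    split_ifs
    · ring
    · ring
  have hli : LinearIndependent ℂ y := by
    rw [Fintype.linearIndependent_iff]
    intro b hb i
    have h1 : ⟪g i, A (∑ j, b j • y j)⟫_ℂ = 0 := by rw [hb]; simp
    simp only [map_sum, map_smul, inner_sum, inner_smul_right, hgy] at h1
    simp only [mul_ite, mul_zero, Finset.sum_ite_eq, Finset.mem_univ, if_true] at h1
    refine (mul_eq_zero.mp h1).resolve_right (neg_ne_zero.2 (mul_ne_zero hc fun h => ?_))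
    simpa using congrArg Complex.re h
  refine ⟨Submodule.span ℂ (Set.range y), ?_, ?_, ?_⟩
  · rw [Submodule.span_le]
    rintro _ ⟨j, rfl⟩
    exact U.add_mem (hg j) (U.sum_mem fun l _ => U.smul_mem _ (hf l))
  · rw [finrank_span_eq_card hli]; simp
  · intro x hx
    obtain ⟨b, rfl⟩ := (Submodule.mem_span_range_iff_exists_fun ℂ).1 hx
    simp [map_sum, sum_inner, inner_sum, inner_smul_left, inner_smul_right, hyy]

theorem count_of_HP {A : E →L[ℂ] E} {U : Submodule ℂ E} {m k : ℕ} (e : Fin m → E)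
    (hspan : U ≤ Submodule.span ℂ (Set.range e))
    (hd : ∀ i, ⟪e i, A (e i)⟫_ℂ ≠ 0) (ho : ∀ i j, i ≠ j → ⟪e i, A (e j)⟫_ℂ = 0)
    (hP : HP A k U) (z : ℂ) (hz : ∀ i, (z * ⟪e i, A (e i)⟫_ℂ).re ≠ 0) :
    k ≤ (Finset.univ.filter fun i => 0 < (z * ⟪e i, A (e i)⟫_ℂ).re).card := by
  have hopen : IsOpen {z' : ℂ | ∀ i, 0 < (z * ⟪e i, A (e i)⟫_ℂ).re * (z' * ⟪e i, A (e i)⟫_ℂ).re} := by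
    simp only [Set.ofPred_forall]
    refine isOpen_iInter_of_finite fun i => ?_
    exact isOpen_lt continuous_const (by fun_prop)
  obtain ⟨z', hz', W, hWU, hWk, hW⟩ := (MeasureTheory.Measure.dense_of_ae hP).inter_open_nonempty _
    hopen ⟨z, fun i => mul_self_pos.2 (hz i)⟩
  refine hWk.trans ?_
  let S := {i : Fin m // 0 < (z * ⟪e i, A (e i)⟫_ℂ).re}
  let T : E →ₗ[ℂ] (S → ℂ) := LinearMap.pi fun i => (innerSL ℂ (e i.1) ∘L A).toLinearMap
  have hinj : Function.Injective (T.domRestrict W) := by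
    rw [← LinearMap.ker_eq_bot, eq_bot_iff]
    rintro ⟨x, hx⟩ hker
    obtain ⟨b, hb⟩ := (Submodule.mem_span_range_iff_exists_fun ℂ).1 (hspan (hWU hx))
    have hex : ∀ i, ⟪e i, A x⟫_ℂ = b i * ⟪e i, A (e i)⟫_ℂ := by
      intro i
      rw [← hb, map_sum, inner_sum, Finset.sum_eq_single i]
      · rw [map_smul, inner_smul_right]
      · intro j _ hj
        rw [map_smul, inner_smul_right, ho i j hj.symm, mul_zero]
      · simp
    have hb0 : ∀ i, 0 < (z * ⟪e i, A (e i)⟫_ℂ).re → b i = 0 := by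
      intro i hi
      have h1 : T x ⟨i, hi⟩ = 0 := congrFun (LinearMap.mem_ker.1 hker) ⟨i, hi⟩
      have h2 : ⟪e i, A x⟫_ℂ = 0 := by simpa [T] using h1
      rw [hex] at h2
      exact (mul_eq_zero.mp h2).resolve_right (hd i)
    have hq : (z' * ⟪x, A x⟫_ℂ).re = ∑ i, normSq (b i) * (z' * ⟪e i, A (e i)⟫_ℂ).re := by
      have : z' * ⟪x, A x⟫_ℂ = ∑ i, (normSq (b i) : ℂ) * (z' * ⟪e i, A (e i)⟫_ℂ) := by
        nth_rewrite 1 [← hb]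
        rw [sum_inner, Finset.mul_sum]
        refine Finset.sum_congr rfl fun i _ => ?_
        rw [inner_smul_left, hex, normSq_eq_conj_mul_self]
        ring
      rw [this, re_sum]
      exact Finset.sum_congr rfl fun i _ => re_ofReal_mul _ _
    have hterm : ∀ i, normSq (b i) * (z' * ⟪e i, A (e i)⟫_ℂ).re ≤ 0 := by
      intro i
      rcases lt_or_gt_of_ne (hz i) with h | h
      · have : (z' * ⟪e i, A (e i)⟫_ℂ).re < 0 := neg_of_mul_pos_right (hz' i) h.le
        exact mul_nonpos_of_nonneg_of_nonpos (normSq_nonneg _) this.le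
      · simp [hb0 i h]
    have hsum := hW x hx
    rw [hq] at hsum
    have hz0 := (Finset.sum_eq_zero_iff_of_nonpos (fun i _ => hterm i)).1
      (le_antisymm (Finset.sum_nonpos fun i _ => hterm i) hsum)
    have hball : ∀ i, b i = 0 := by
      intro i
      have h1 := (mul_eq_zero.mp (hz0 i (Finset.mem_univ i))).resolve_right
        (fun h => by have := hz' i; rw [h] at this; simp at this)
      exact normSq_eq_zero.1 h1
    simp [← hb, hball]
  have := LinearMap.finrank_le_finrank_of_injective hinj
  refine this.trans (le_of_eq ?_)
  rw [Module.finrank_fintype_fun_eq_card, Fintype.card_subtype]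

theorem diag_neutral {A : E →L[ℂ] E} {U : Submodule ℂ E} {m k : ℕ} (e : Fin m → E)
    (heU : ∀ i, e i ∈ U) (hspan : U ≤ Submodule.span ℂ (Set.range e))
    (hd : ∀ i, ⟪e i, A (e i)⟫_ℂ ≠ 0) (ho : ∀ i j, i ≠ j → ⟪e i, A (e j)⟫_ℂ = 0)
    (hP : HP A k U) :
    ∃ V : Submodule ℂ E, V ≤ U ∧ k ≤ Module.finrank ℂ V ∧ ∀ x ∈ V, ⟪x, A x⟫_ℂ = 0 := by
  classical
  have hcount := count_of_HP e hspan hd ho hP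
  set w : Fin m → ℂ := fun i => ⟪e i, A (e i)⟫_ℂ with hw
  have hgood : ∃ c : ℕ, ∃ z : ℂ, (∀ i, (z * w i).re ≠ 0) ∧
      (Finset.univ.filter fun i => 0 < (z * w i).re).card = c := by
    have : ∀ᵐ z : ℂ, ∀ i, z * w i + (starRingEnd ℂ) z * (starRingEnd ℂ) (w i) ≠ 0 :=
      MeasureTheory.ae_all_iff.2 fun i => ae_comb_ne _ _ (Or.inl (hd i))
    obtain ⟨z, hz⟩ := this.exists
    refine ⟨_, z, fun i h => hz i ?_, rfl⟩
    rw [← map_mul, add_conj, h]; simp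
  obtain ⟨z0, hz0, hk'⟩ := Nat.find_spec hgood
  have hmin : ∀ z : ℂ, (∀ i, (z * w i).re ≠ 0) → Nat.find hgood ≤
      (Finset.univ.filter fun i => 0 < (z * w i).re).card := fun z hz =>
    Nat.find_min' hgood ⟨z, hz, rfl⟩
  set k' := Nat.find hgood with hk'def
  have hkk : k ≤ k' := hk' ▸ hcount z0 hz0
  set h : Fin m → ℝ := fun i => -(z0 * w i).re with hh
  set t : Fin m → ℝ := fun i => (z0 * w i).im / (z0 * w i).re with ht
  have hrep : ∀ i, -z0 * w i = h i * (1 + t i * I) := by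
    intro i
    apply Complex.ext
    · simp [hh]
    · have := hz0 i
      simp only [hh, ht]
      rw [im_ofReal_mul, neg_mul, neg_im]
      simp only [add_im, one_im, zero_add, re_ofReal_mul, im_ofReal_mul, I_im, mul_one]
      rw [neg_mul, mul_div_cancel₀ _ this]
  have hne : ∀ i, h i ≠ 0 := fun i => neg_ne_zero.2 (hz0 i)
  have hre : ∀ (s : ℝ) i, ((-(s + I) * z0) * w i).re = h i * (s - t i) := by
    intro s i
    rw [show -(s + I) * z0 * w i = (s + I) * (-z0 * w i) by ring, hrep,
      show ((s : ℂ) + I) * (h i * (1 + t i * I)) = (h i : ℂ) * ((s + I) * (1 + t i * I)) by ring,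
      re_ofReal_mul]
    simp
  have hnegc : (Finset.univ.filter fun i => h i < 0).card = k' := by
    rw [← hk']
    congr 1
    ext i
    simp [hh]
  obtain ⟨d, α, β, hα, hβ, hαp, hβn, hαm, hβm, hi1, hi2⟩ := interlace h t k' hne hnegc (by
    intro s hs
    have hs' : ∀ i, h i * (s - t i) ≠ 0 := fun i => mul_ne_zero (hne i) (sub_ne_zero.2 (hs i).symm)
    constructor
    · have := hmin (-(s + I) * z0) (fun i => by rw [hre]; exact hs' i)
      simpa only [hre] using this
    · have hre' : ∀ i, (-(-(s + I) * z0) * w i).re = -(h i * (s - t i)) := by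
        intro i; rw [neg_mul, neg_re, hre]
      have := hmin (-(-(s + I) * z0)) (fun i => by rw [hre']; exact neg_ne_zero.2 (hs' i))
      simpa only [hre'] using this)
  obtain ⟨Q, hQ, hQ'⟩ := fan_pall (t ∘ β) hβm d (t ∘ α) hαm hi1 hi2
  rcases Nat.eq_zero_or_pos k' with hk0 | hkpos
  · exact ⟨⊥, bot_le, by omega, by simp⟩
  have hz0ne : z0 ≠ 0 := by
    rintro rfl
    exact hz0 (β ⟨0, hkpos⟩) (by simp)
  have hwrep : ∀ i, w i = (-z0)⁻¹ * (h i * (1 + t i * I)) := by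
    intro i
    rw [← hrep, inv_mul_cancel_left₀ (neg_ne_zero.2 hz0ne)]
  have hαβ : ∀ i j, α i ≠ β j := fun i j hij => by
    have h1 := hαp i
    have h2 := hβn j
    rw [hij] at h1
    exact lt_asymm h1 h2
  obtain ⟨V, hV1, hV2, hV3⟩ := neutral_of_isometry (A := A)
    (fun l => ((Real.sqrt (h (α l)))⁻¹ : ℂ) • e (α l))
    (fun j => ((Real.sqrt (-h (β j)))⁻¹ : ℂ) • e (β j)) (t ∘ α) (t ∘ β) (-z0)⁻¹
    (inv_ne_zero (neg_ne_zero.2 hz0ne)) (by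
      intro i j
      simp only [map_smul, inner_smul_left, inner_smul_right, map_inv₀, conj_ofReal]
      split_ifs with hij
      · subst hij
        have h1 : ((Real.sqrt (h (α i)) : ℂ)) * (Real.sqrt (h (α i)) : ℂ) = h (α i) := by
          exact_mod_cast Real.mul_self_sqrt (hαp i).le
        have h2 : (h (α i) : ℂ) ≠ 0 := by exact_mod_cast (hαp i).ne'
        rw [← mul_assoc, ← mul_inv, h1]
        change _ * w (α i) = _
        rw [hwrep]
        simp only [Function.comp_apply]
        field_simp
      · rw [ho _ _ (hα.ne hij)]; simp) (by
      intro i j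
      simp only [map_smul, inner_smul_left, inner_smul_right, map_inv₀, conj_ofReal]
      split_ifs with hij
      · subst hij
        have h1 : ((Real.sqrt (-h (β i)) : ℂ)) * (Real.sqrt (-h (β i)) : ℂ) = -h (β i) := by
          exact_mod_cast Real.mul_self_sqrt (neg_pos.2 (hβn i)).le
        have h2 : (h (β i) : ℂ) ≠ 0 := by exact_mod_cast (hβn i).ne
        rw [← mul_assoc, ← mul_inv, h1]
        change _ * w (β i) = _
        rw [hwrep]
        simp only [Function.comp_apply]
        field_simp
      · rw [ho _ _ (hβ.ne hij)]; simp) (by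
      intro i j
      simp only [map_smul, inner_smul_left, inner_smul_right]
      rw [ho _ _ (hαβ i j)]; simp) (by
      intro i j
      simp only [map_smul, inner_smul_left, inner_smul_right]
      rw [ho _ _ (hαβ j i).symm]; simp) Q hQ hQ' U
    (fun i => U.smul_mem _ (heU _)) (fun i => U.smul_mem _ (heU _))
  exact ⟨V, hV1, hkk.trans hV2, hV3⟩

theorem isotropic (A : E →L[ℂ] E) : ∀ (m : ℕ) (U : Submodule ℂ E), Module.finrank ℂ U = m →
    ∀ k, HP A k U →
    ∃ V : Submodule ℂ E, V ≤ U ∧ k ≤ Module.finrank ℂ V ∧ ∀ x ∈ V, ⟪x, A x⟫_ℂ = 0 := by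
  intro m
  induction m using Nat.strong_induction_on with
  | _ m ih =>
  intro U hU k hP
  by_cases hn : ∀ v, IsEig A U v → ⟪v, A v⟫_ℂ ≠ 0
  · obtain ⟨e, he1, he2, he3, he4⟩ := exists_diag A m U hU hn
    exact diag_neutral e he1 he2 he3 he4 hP
  · push Not at hn
    obtain ⟨v, hv, hv0⟩ := hn
    cases k with
    | zero => exact ⟨⊥, bot_le, by omega, by simp⟩
    | succ k =>
      obtain ⟨U', hlt, hP', hvU', hort⟩ := neutral_step hv hv0 k hP
      obtain ⟨V, hV1, hV2, hV3⟩ := ih _ (hU ▸ Submodule.finrank_lt_finrank_of_lt hlt) U' rfl k hP'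
      refine ⟨V ⊔ Submodule.span ℂ {v}, ?_, ?_, ?_⟩
      · refine sup_le (hV1.trans hlt.le) ?_
        rw [Submodule.span_singleton_le_iff_mem]
        exact hv.1
      · have : V < V ⊔ Submodule.span ℂ {v} := by
          refine lt_of_le_of_ne le_sup_left fun he => hvU' (hV1 ?_)
          rw [he]
          exact Submodule.mem_sup_right (Submodule.mem_span_singleton_self v)
        have := Submodule.finrank_lt_finrank_of_lt this
        omega
      · intro x hx
        obtain ⟨y, hy, w, hw, rfl⟩ := Submodule.mem_sup.1 hx
        obtain ⟨c, rfl⟩ := Submodule.mem_span_singleton.1 hw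
        have := hort y (hV1 hy)
        simp only [map_add, map_smul, inner_add_left, inner_add_right, inner_smul_left,
          inner_smul_right, hv0, this.1, this.2, hV3 y hy]
        ring
end Diag
section Final
variable {E : Type*} [NormedAddCommGroup E] [InnerProductSpace ℂ E] [FiniteDimensional ℂ E]

theorem exists_sub_finrank (V : Submodule ℂ E) (m : ℕ) (h : m ≤ Module.finrank ℂ V) :
    ∃ W : Submodule ℂ E, W ≤ V ∧ Module.finrank ℂ W = m := by
  let b := Module.finBasis ℂ V
  let f : Fin m → E := fun i => (b (Fin.castLE h i) : E)
  have hf : LinearIndependent ℂ f := by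
    have h1 : LinearIndependent ℂ (fun i : Fin m => b (Fin.castLE h i)) :=
      b.linearIndependent.comp _ (Fin.castLE_injective h)
    exact h1.map' V.subtype (Submodule.ker_subtype V)
  refine ⟨Submodule.span ℂ (Set.range f), ?_, ?_⟩
  · rw [Submodule.span_le]
    rintro _ ⟨i, rfl⟩
    exact (b (Fin.castLE h i)).2
  · rw [finrank_span_eq_card hf]; simp

theorem polar_zero (T : E →L[ℂ] E) (V : Submodule ℂ E) (h : ∀ x ∈ V, ⟪x, T x⟫_ℂ = 0) :
    ∀ x ∈ V, ∀ y ∈ V, ⟪x, T y⟫_ℂ = 0 := by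
  intro x hx y hy
  have e1 := h _ (V.add_mem hx hy)
  have e2 := h _ (V.add_mem hx (V.smul_mem I hy))
  have ex := h x hx
  have ey := h y hy
  simp only [map_add, map_smul, inner_add_left, inner_add_right, inner_smul_left,
    inner_smul_right, ex, ey, conj_I] at e1 e2
  have e3 : I * (⟪x, T y⟫_ℂ - ⟪y, T x⟫_ℂ) = 0 := by linear_combination e2
  have e4 := (mul_eq_zero.mp e3).resolve_left I_ne_zero
  have e5 : (2 : ℂ) * ⟪x, T y⟫_ℂ = 0 := by linear_combination e1 + e4
  exact (mul_eq_zero.mp e5).resolve_left two_ne_zero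

theorem starProj_isOrth [CompleteSpace E] (V : Submodule ℂ E) : IsOrthProj (V.starProjection) := by
  refine ⟨?_, ?_⟩
  · exact isSelfAdjoint_starProjection V
  · exact Submodule.isIdempotentElem_starProjection V

theorem starProj_rank (V : Submodule ℂ E) [CompleteSpace E] (k : ℕ) (h : Module.finrank ℂ V = k) :
    opRank (V.starProjection) = k := by
  unfold opRank
  have : LinearMap.range (V.starProjection : E →ₗ[ℂ] E) = V := Submodule.range_starProjection V
  rw [this, ← Module.finrank_eq_rank, h]

theorem mem_rankK_iff [CompleteSpace E] (k : ℕ) (A : E →L[ℂ] E) (lam : ℂ) : lam ∈ rankKRange k A ↔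
    ∃ V : Submodule ℂ E, Module.finrank ℂ V = k ∧ ∀ x ∈ V, ⟪x, (A - lam • 1) x⟫_ℂ = 0 := by
  constructor
  · rintro ⟨P, ⟨hsa, hid⟩, hrk, hP⟩
    refine ⟨LinearMap.range (P : E →ₗ[ℂ] E), ?_, ?_⟩
    · unfold opRank at hrk
      rw [← Module.finrank_eq_rank] at hrk
      exact_mod_cast hrk
    · rintro _ ⟨y, rfl⟩
      have h1 : P (A (P y)) = lam • P y := congrArg (fun T : E →L[ℂ] E => T y) hP
      have h2 : P (P y) = P y := congrArg (fun T : E →L[ℂ] E => T y) hid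
      have h3 : ∀ u v, ⟪P u, v⟫_ℂ = ⟪u, P v⟫_ℂ := fun u v => hsa.isSymmetric u v
      change ⟪P y, A (P y) - lam • P y⟫_ℂ = 0
      rw [h3, map_sub, map_smul, h1, h2, sub_self, inner_zero_right]
  · rintro ⟨V, hV, h⟩
    refine ⟨V.starProjection, starProj_isOrth V, starProj_rank V k hV, ?_⟩
    have h' := polar_zero _ V h
    ext y
    refine ext_inner_left ℂ fun x => ?_
    change ⟪x, V.starProjection (A (V.starProjection y))⟫_ℂ = ⟪x, lam • V.starProjection y⟫_ℂ
    have := h' (V.starProjection x) (Submodule.starProjection_apply_mem V x)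
      (V.starProjection y) (Submodule.starProjection_apply_mem V y)
    change ⟪V.starProjection x, A (V.starProjection y) - lam • V.starProjection y⟫_ℂ = 0 at this
    rw [Submodule.inner_starProjection_left_eq_right, map_sub, map_smul, inner_sub_right,
      sub_eq_zero] at this
    rw [this]
    have h2 : V.starProjection (V.starProjection y) = V.starProjection y :=
      congrArg (fun T : E →L[ℂ] E => T y) (starProj_isOrth V).2
    rw [h2]

theorem rank_perturb [CompleteSpace E] (k r : ℕ) (A F : E →L[ℂ] E) (hF : opRank F ≤ r) (lam : ℂ)
    (h : lam ∈ rankKRange k A) : lam ∈ rankKRange (k - r) (A + F) := by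
  rw [mem_rankK_iff] at h ⊢
  obtain ⟨V, hV, h⟩ := h
  have hF' : Module.finrank ℂ (LinearMap.range (F : E →ₗ[ℂ] E)) ≤ r := by
    unfold opRank at hF
    rw [← Module.finrank_eq_rank] at hF
    exact_mod_cast hF
  have h1 := LinearMap.finrank_range_add_finrank_ker (F : E →ₗ[ℂ] E)
  have h2 := Submodule.finrank_sup_add_finrank_inf_eq V (LinearMap.ker (F : E →ₗ[ℂ] E))
  have h3 := Submodule.finrank_le (V ⊔ LinearMap.ker (F : E →ₗ[ℂ] E))
  obtain ⟨W, hW, hWd⟩ := exists_sub_finrank (V ⊓ LinearMap.ker (F : E →ₗ[ℂ] E)) (k - r) (by omega)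
  refine ⟨W, hWd, fun x hx => ?_⟩
  have hx' := hW hx
  have hFx : F x = 0 := hx'.2
  have := h x hx'.1
  change ⟪x, A x - lam • x⟫_ℂ = 0 at this
  change ⟪x, A x + F x - lam • x⟫_ℂ = 0
  rw [hFx, add_zero, this]

theorem proj_inner [CompleteSpace E] {n : ℕ} (e : OrthonormalBasis (Fin n) ℂ E) (J : Finset (Fin n)) :
    ∃ P : E →L[ℂ] E, IsOrthProj P ∧ opRank P = (J.card : ℕ) ∧
      ∀ x, ⟪x, P x⟫_ℂ = ∑ i ∈ J, ((‖⟪e i, x⟫_ℂ‖ ^ 2 : ℝ) : ℂ) := by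
  let V : Submodule ℂ E := Submodule.span ℂ (Set.range fun i : J => e i)
  have hV : Module.finrank ℂ V = J.card := by
    have h1 : LinearIndependent ℂ (fun i : J => e i) :=
      e.orthonormal.linearIndependent.comp _ Subtype.val_injective
    rw [finrank_span_eq_card h1]
    simp
  refine ⟨V.starProjection, starProj_isOrth V, starProj_rank V _ hV, fun x => ?_⟩
  have h1 : ∀ i ∈ J, V.starProjection (e i) = e i := fun i hi =>
    Submodule.starProjection_eq_self_iff.2 (Submodule.subset_span ⟨⟨i, hi⟩, rfl⟩)
  have h2 : ∀ i ∉ J, V.starProjection (e i) = 0 := by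
    intro i hi
    rw [Submodule.starProjection_apply_eq_zero_iff, Submodule.mem_orthogonal]
    intro u hu
    induction hu using Submodule.span_induction with
    | mem u hu =>
      obtain ⟨j, rfl⟩ := hu
      exact e.orthonormal.2 (fun h => hi (h ▸ j.2))
    | zero => simp
    | add u v _ _ hu hv => rw [inner_add_left, hu, hv, add_zero]
    | smul a u _ hu => rw [inner_smul_left, hu, mul_zero]
  have h3 : V.starProjection x = ∑ i ∈ J, ⟪e i, x⟫_ℂ • e i := by
    conv_lhs => rw [← e.sum_repr' x]
    rw [map_sum, ← Finset.sum_subset (Finset.subset_univ J)]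
    · exact Finset.sum_congr rfl fun i hi => by rw [map_smul, h1 i hi]
    · intro i _ hi
      rw [map_smul, h2 i hi, smul_zero]
  rw [h3, inner_sum]
  refine Finset.sum_congr rfl fun i _ => ?_
  rw [inner_smul_right, ← inner_conj_symm x (e i), mul_conj, normSq_eq_norm_sq]

theorem direction [CompleteSpace E] (n k r : ℕ) (hn : Module.finrank ℂ E = n) (hrk : r < k)
    (hk : k ≤ n) (A : E →L[ℂ] E) (lam c d : ℂ) (hc : ‖c‖ = 1) (hcd : c * d = -1)
    (h : ∀ P : E →L[ℂ] E, IsOrthProj P → opRank P = r →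
      lam ∈ rankKRange (k - r) (A + (2 * d * (‖A‖ : ℂ)) • P)) :
    ∃ W : Submodule ℂ E, k ≤ Module.finrank ℂ W ∧
      ∀ x ∈ W, 0 ≤ (c * ⟪x, (A - lam • 1) x⟫_ℂ).re := by
  let T : E →L[ℂ] E := A - lam • 1
  let B : E →L[ℂ] E := reOp (c • T)
  have hB : (B : E →ₗ[ℂ] E).IsSymmetric := by
    have : IsSelfAdjoint B := by
      unfold IsSelfAdjoint
      simp only [B, reOp]
      rw [star_smul, star_add, ContinuousLinearMap.star_eq_adjoint,
        ContinuousLinearMap.star_eq_adjoint, ContinuousLinearMap.adjoint_adjoint, add_comm]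
      congr 1
      simp
    exact this.isSymmetric
  have hBx : ∀ x, (⟪x, B x⟫_ℂ).re = (c * ⟪x, T x⟫_ℂ).re := by
    intro x
    simp only [B, reOp]
    rw [smul_apply, add_apply, inner_smul_right,
      inner_add_right, ContinuousLinearMap.adjoint_inner_right, ← inner_conj_symm _ x,
      smul_apply, inner_smul_right, add_conj]
    simp
  let e := hB.eigenvectorBasis hn
  let b := hB.eigenvalues hn
  have hq : ∀ x, (c * ⟪x, T x⟫_ℂ).re = ∑ i, b i * ‖⟪e i, x⟫_ℂ‖ ^ 2 := by
    intro x
    rw [← hBx, ← e.sum_inner_mul_inner x (B x), re_sum]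
    refine Finset.sum_congr rfl fun i _ => ?_
    have h1 : ⟪e i, B x⟫_ℂ = (b i : ℂ) * ⟪e i, x⟫_ℂ := by
      have h2 : ⟪B (e i), x⟫_ℂ = ⟪e i, B x⟫_ℂ := hB (e i) x
      have h3 : B (e i) = (b i : ℂ) • e i := hB.apply_eigenvectorBasis hn i
      rw [← h2, h3, inner_smul_left, conj_ofReal]
    rw [h1, ← inner_conj_symm x (e i)]
    have : (starRingEnd ℂ) ⟪e i, x⟫_ℂ * ((b i : ℂ) * ⟪e i, x⟫_ℂ) =
        ((b i * ‖⟪e i, x⟫_ℂ‖ ^ 2 : ℝ) : ℂ) := by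
      rw [mul_left_comm, mul_comm ((starRingEnd ℂ) _), mul_conj, normSq_eq_norm_sq]
      push_cast; ring
    rw [this, ofReal_re]
  have hbi : ∀ i, b i = (c * ⟪e i, A (e i)⟫_ℂ).re - (c * lam).re := by
    intro i
    have h1 := hq (e i)
    rw [Finset.sum_eq_single i] at h1
    · have h2 : ⟪e i, T (e i)⟫_ℂ = ⟪e i, A (e i)⟫_ℂ - lam := by
        change ⟪e i, A (e i) - lam • e i⟫_ℂ = _
        rw [inner_sub_right, inner_smul_right, inner_self_eq_norm_sq_to_K, e.orthonormal.1 i]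
        simp
      rw [h2, mul_sub, sub_re, inner_self_eq_norm_sq_to_K, e.orthonormal.1 i] at h1
      rw [h1]; simp
    · intro j _ hj
      rw [e.orthonormal.2 hj]; simp
    · simp
  have hAb : ∀ i, |(c * ⟪e i, A (e i)⟫_ℂ).re| ≤ ‖A‖ := by
    intro i
    refine (abs_re_le_norm _).trans ?_
    rw [norm_mul, hc, one_mul]
    refine (norm_inner_le_norm _ _).trans ?_
    have := A.le_opNorm (e i)
    rw [e.orthonormal.1 i, mul_one] at this
    rw [e.orthonormal.1 i, one_mul]; exact this
  let Ip : Finset (Fin n) := Finset.univ.filter fun i => 0 ≤ b i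
  by_cases hI : k ≤ Ip.card
  · refine ⟨Submodule.span ℂ (Set.range fun i : Ip => e i), ?_, ?_⟩
    · have h1 : LinearIndependent ℂ (fun i : Ip => e i) :=
        e.orthonormal.linearIndependent.comp _ Subtype.val_injective
      rw [finrank_span_eq_card h1]
      simpa using hI
    · intro x hx
      change 0 ≤ (c * ⟪x, T x⟫_ℂ).re
      have h0 : ∀ i ∉ Ip, ⟪e i, x⟫_ℂ = 0 := by
        intro i hi
        induction hx using Submodule.span_induction with
        | mem u hu =>
          obtain ⟨j, rfl⟩ := hu
          exact e.orthonormal.2 (fun h => hi (h ▸ j.2))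
        | zero => simp
        | add u v _ _ hu hv => rw [inner_add_right, hu, hv, add_zero]
        | smul a u _ hu => rw [inner_smul_right, hu, mul_zero]
      rw [hq]
      refine Finset.sum_nonneg fun i _ => ?_
      by_cases hi : i ∈ Ip
      · exact mul_nonneg (Finset.mem_filter.1 hi).2 (sq_nonneg _)
      · rw [h0 i hi]; simp
  · exfalso
    push Not at hI
    obtain ⟨i0, hi0⟩ : ∃ i, i ∉ Ip := by
      by_contra hcon
      push Not at hcon
      have : Ip = Finset.univ := Finset.eq_univ_iff_forall.2 hcon
      rw [this, Finset.card_univ, Fintype.card_fin] at hI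
      omega
    have hb0 : b i0 < 0 := by simpa [Ip] using hi0
    have hlam : -‖A‖ < (c * lam).re := by
      have := hbi i0
      have := abs_le.1 (hAb i0)
      linarith
    obtain ⟨J, hJr, hJ⟩ : ∃ J : Finset (Fin n), J.card = r ∧ (J ⊆ Ip ∨ Ip ⊆ J) := by
      rcases le_total r Ip.card with hle | hle
      · obtain ⟨J, h1, h2⟩ := Finset.exists_subset_card_eq hle
        exact ⟨J, h2, Or.inl h1⟩
      · obtain ⟨J, h1, h2, h3⟩ := Finset.exists_subsuperset_card_eq (Finset.subset_univ Ip) hle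
          (by rw [Finset.card_univ, Fintype.card_fin]; omega)
        exact ⟨J, h3, Or.inr h1⟩
    obtain ⟨P, hP, hPr, hPx⟩ := proj_inner e J
    have hmem := h P hP (by rw [hPr, hJr])
    rw [mem_rankK_iff] at hmem
    obtain ⟨W, hW, hW0⟩ := hmem
    have hcard : (Ip \ J).card < k - r := by
      rcases hJ with hJ | hJ
      · rw [Finset.card_sdiff_of_subset hJ, hJr]; omega
      · rw [Finset.sdiff_eq_empty_iff_subset.2 hJ, Finset.card_empty]; omega
    let L : E →ₗ[ℂ] ((Ip \ J : Finset (Fin n)) → ℂ) :=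
      LinearMap.pi fun i => (innerSL ℂ (e i)).toLinearMap
    have hLk : ∃ x ∈ W, x ≠ 0 ∧ L x = 0 := by
      have h1 : LinearMap.ker (L.comp W.subtype) ≠ ⊥ := by
        apply LinearMap.ker_ne_bot_of_finrank_lt
        rw [hW, Module.finrank_fintype_fun_eq_card, Fintype.card_coe]
        exact hcard
      obtain ⟨x, hx, hx0⟩ := Submodule.exists_mem_ne_zero_of_ne_bot h1
      exact ⟨x, x.2, by simpa using hx0, hx⟩
    obtain ⟨x, hxW, hx0, hLx⟩ := hLk
    have hLx' : ∀ i ∈ Ip, i ∉ J → ⟪e i, x⟫_ℂ = 0 := by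
      intro i hi hiJ
      exact congrFun hLx ⟨i, Finset.mem_sdiff.2 ⟨hi, hiJ⟩⟩
    have hz := hW0 x hxW
    have hz2 : (c * ⟪x, T x⟫_ℂ).re - 2 * ‖A‖ * ∑ i ∈ J, ‖⟪e i, x⟫_ℂ‖ ^ 2 = 0 := by
      have h1 : ⟪x, (A + (2 * d * (‖A‖ : ℂ)) • P - lam • 1) x⟫_ℂ =
          ⟪x, T x⟫_ℂ + (2 * d * (‖A‖ : ℂ)) * ⟪x, P x⟫_ℂ := by
        rw [← inner_smul_right, ← inner_add_right]
        congr 1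
        simp only [T, sub_apply, add_apply,
          smul_apply]
        abel
      rw [h1, hPx, ← ofReal_sum] at hz
      have h2 : c * ⟪x, T x⟫_ℂ = ((2 * ‖A‖ * ∑ i ∈ J, ‖⟪e i, x⟫_ℂ‖ ^ 2 : ℝ) : ℂ) := by
        rw [ofReal_mul, ofReal_mul]
        push_cast at hz ⊢
        linear_combination c * hz -
          2 * (‖A‖ : ℂ) * (∑ i ∈ J, (‖⟪e i, x⟫_ℂ‖ : ℂ) ^ 2) * hcd
      rw [h2, ofReal_re, sub_self]
    have hsum : ∑ i ∈ J, ‖⟪e i, x⟫_ℂ‖ ^ 2 = ∑ i, if i ∈ J then ‖⟪e i, x⟫_ℂ‖ ^ 2 else 0 := by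
      simp
    rw [hq, hsum, Finset.mul_sum, ← Finset.sum_sub_distrib] at hz2
    have hle : ∀ i, b i * ‖⟪e i, x⟫_ℂ‖ ^ 2 -
        2 * ‖A‖ * (if i ∈ J then ‖⟪e i, x⟫_ℂ‖ ^ 2 else 0) ≤ 0 ∧
        (⟪e i, x⟫_ℂ ≠ 0 → b i * ‖⟪e i, x⟫_ℂ‖ ^ 2 -
        2 * ‖A‖ * (if i ∈ J then ‖⟪e i, x⟫_ℂ‖ ^ 2 else 0) < 0) := by
      intro i
      by_cases hx : ⟪e i, x⟫_ℂ = 0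
      · simp [hx]
      · have hp : 0 < ‖⟪e i, x⟫_ℂ‖ ^ 2 := by positivity
        have key : b i * ‖⟪e i, x⟫_ℂ‖ ^ 2 -
            2 * ‖A‖ * (if i ∈ J then ‖⟪e i, x⟫_ℂ‖ ^ 2 else 0) < 0 := by
          split_ifs with hiJ
          · have h1 := hbi i
            have h2 := abs_le.1 (hAb i)
            have h3 : b i - 2 * ‖A‖ < 0 := by linarith
            have h4 := mul_neg_of_neg_of_pos h3 hp
            linarith
          · have h1 : b i < 0 := by
              by_contra hcon
              exact hx (hLx' i (Finset.mem_filter.2 ⟨Finset.mem_univ _, not_lt.1 hcon⟩) hiJ)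
            have h4 := mul_neg_of_neg_of_pos h1 hp
            linarith
        exact ⟨key.le, fun _ => key⟩
    have hall := (Finset.sum_eq_zero_iff_of_nonpos fun i _ => (hle i).1).1 hz2
    apply hx0
    rw [← e.sum_repr' x]
    refine Finset.sum_eq_zero fun i hi => ?_
    by_cases hx : ⟪e i, x⟫_ℂ = 0
    · rw [hx, zero_smul]
    · exact absurd (hall i hi) ((hle i).2 hx).ne
end Final

end Helpers

/-- Finite-dimensional case (operators on `ℂ^n`): for `1 ≤ r < k ≤ n` and any
collection `𝒮` of operators of rank at most `r` containing
`𝒮₀ = {2e^{iξ}‖A‖P : P a rank-r orthogonal projection, ξ ∈ [0,2π)}`,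
`Λ_k(A)` is the intersection of the sets `Λ_{k-r}(A+F)` for `F ∈ 𝒮`. -/
theorem rankKRange_eq_iInter_perturbed_finiteDim
    (n r k : ℕ) (hr : 1 ≤ r) (hrk : r < k) (hk : k ≤ n)
    (A : EuclideanSpace ℂ (Fin n) →L[ℂ] EuclideanSpace ℂ (Fin n))
    (S : Set (EuclideanSpace ℂ (Fin n) →L[ℂ] EuclideanSpace ℂ (Fin n)))
    (hSrank : ∀ F ∈ S, opRank F ≤ r)
    (hS0 : ∀ ξ ∈ Set.Ico (0 : ℝ) (2 * Real.pi),
      ∀ P : EuclideanSpace ℂ (Fin n) →L[ℂ] EuclideanSpace ℂ (Fin n),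
      IsOrthProj P → opRank P = r →
      ((2 * Complex.exp (ξ * Complex.I) * (‖A‖ : ℂ)) • P) ∈ S) :
    rankKRange k A = ⋂ F ∈ S, rankKRange (k - r) (A + F) := by
  have hn : Module.finrank ℂ (EuclideanSpace ℂ (Fin n)) = n := by simp
  apply Set.Subset.antisymm
  · intro lam h
    simp only [Set.mem_iInter]
    exact fun F hF => rank_perturb k r A F (hSrank F hF) lam h
  · intro lam h
    simp only [Set.mem_iInter] at h
    have hHP : HP (A - lam • 1) k ⊤ := by
      refine Filter.Eventually.of_forall fun z => ?_
      by_cases hz : z = 0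
      · exact ⟨⊤, le_rfl, by rw [finrank_top, hn]; exact hk, fun x _ => by simp [hz]⟩
      have hzn : (‖z‖ : ℂ) ≠ 0 := by exact_mod_cast norm_ne_zero_iff.2 hz
      let c : ℂ := z / ‖z‖
      have hc : ‖c‖ = 1 := by
        simp only [c, norm_div, norm_real, norm_norm]
        exact div_self (norm_ne_zero_iff.2 hz)
      have hc0 : c ≠ 0 := by rw [← norm_ne_zero_iff, hc]; exact one_ne_zero
      obtain ⟨η, hη, hηd⟩ : ∃ η ∈ Set.Ico (0 : ℝ) (2 * Real.pi),
          Complex.exp (η * Complex.I) = -c⁻¹ := by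
        have hd : ‖-c⁻¹‖ = 1 := by rw [norm_neg, norm_inv, hc, inv_one]
        refine ⟨toIcoMod Real.two_pi_pos 0 (arg (-c⁻¹)), ?_, ?_⟩
        · simpa using toIcoMod_mem_Ico Real.two_pi_pos 0 (arg (-c⁻¹))
        · have h1 := norm_mul_exp_arg_mul_I (-c⁻¹)
          rw [hd, ofReal_one, one_mul] at h1
          rw [← h1, toIcoMod]
          push_cast
          rw [h1, zsmul_eq_mul, sub_mul, mul_assoc, exp_sub, exp_int_mul_two_pi_mul_I, div_one, h1]
      obtain ⟨W, hW, hW0⟩ := direction n k r hn hrk hk A lam c (Complex.exp (η * Complex.I)) hc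
        (by rw [hηd, mul_neg, mul_inv_cancel₀ hc0])
        (fun P hP hPr => h _ (hS0 η hη P hP hPr))
      refine ⟨W, le_top, hW, fun x hx => ?_⟩
      have h1 : z = (‖z‖ : ℂ) * c := by simp only [c]; field_simp
      rw [h1, mul_assoc, re_ofReal_mul]
      exact mul_nonneg (norm_nonneg _) (hW0 x hx)
    obtain ⟨V, -, hV, hV0⟩ := isotropic (A - lam • 1) _ ⊤ rfl k hHP
    obtain ⟨W, hWV, hW⟩ := exists_sub_finrank V k hV
    exact (mem_rankK_iff k A lam).2 ⟨W, hW, fun x hx => hV0 x (hWV hx)⟩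
end
end

section
/- Let ℋ be an infinite-dimensional complex Hilbert space and let T ∈ B(ℋ) be normal with σ(T) ⊆ {ρe^{it} : ρ > 0, t ∈ [s₁,s₂]} for some π ≤ s₁ < s₂ ≤ 2π. Let k be a positive integer, let s₃ ∈ (s₁,s₂), and set ℒ = {ρe^{it} : ρ > 0, t ∈ (s₁,s₃)} and ℛ = {ρe^{it} : ρ > 0, t ∈ (s₃,s₂)}. (a) If ℒ ∩ σ(T) is infinite or contains an eigenvalue of T of infinite multiplicity, then T has a k-dimensional compression T₁ with W(T₁) ⊆ ℒ. (b) If ℛ ∩ σ(T) is infinite or contains an eigenvalue of T of infinite multiplicity, then T has a k-dimensional compression T₂ with W(T₂) ⊆ ℛ. Moreover, if both hypotheses hold, then there exist mutually orthogonal k-dimensional subspaces K₁ and K₂ of ℋ such that the compression of T to K₁ ⊕ K₂ has block-diagonal form T₁ ⊕ T₂ with W(T₁) ⊆ ℒ and W(T₂) ⊆ ℛ. -/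
noncomputable section

open scoped InnerProductSpace
open Complex

variable {H : Type*} [NormedAddCommGroup H] [InnerProductSpace ℂ H] [CompleteSpace H]

/-- The open sector `{ρ e^{it} : ρ > 0, t ∈ (a,b)}`. -/
def openSector (a b : ℝ) : Set ℂ :=
  { z | ∃ ρ t : ℝ, 0 < ρ ∧ t ∈ Set.Ioo a b ∧ z = ρ * Complex.exp (t * Complex.I) }

/-- The closed sector `{ρ e^{it} : ρ > 0, t ∈ [a,b]}`. -/
def closedSector (a b : ℝ) : Set ℂ :=
  { z | ∃ ρ t : ℝ, 0 < ρ ∧ t ∈ Set.Icc a b ∧ z = ρ * Complex.exp (t * Complex.I) }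

/-- `z` is an eigenvalue of `T` of infinite multiplicity. -/
def HasInfMultEigenvalue (T : H →L[ℂ] H) (z : ℂ) : Prop :=
  ¬ FiniteDimensional ℂ (LinearMap.ker ((T : H →ₗ[ℂ] H) - z • (LinearMap.id : H →ₗ[ℂ] H)))


lemma mem_openSector_iff {a b : ℝ} (hab : a < b) (hb : b - a < Real.pi) (z : ℂ) :
    z ∈ openSector a b ↔
      0 < z.im * Real.cos a - z.re * Real.sin a ∧ z.im * Real.cos b - z.re * Real.sin b < 0 := by
  constructor
  · rintro ⟨ρ, t, hρ, ⟨h1, h2⟩, rfl⟩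
    have e1 : ((ρ : ℂ) * Complex.exp (t * Complex.I)).re = ρ * Real.cos t := by
      simp [Complex.exp_ofReal_mul_I_re]
    have e2 : ((ρ : ℂ) * Complex.exp (t * Complex.I)).im = ρ * Real.sin t := by
      simp [Complex.exp_ofReal_mul_I_im]
    rw [e1, e2]
    have p1 : 0 < Real.sin (t - a) := Real.sin_pos_of_pos_of_lt_pi (by linarith) (by linarith)
    have p2 : 0 < Real.sin (b - t) := Real.sin_pos_of_pos_of_lt_pi (by linarith) (by linarith)
    rw [Real.sin_sub] at p1 p2
    constructor
    · nlinarith [mul_pos hρ p1]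
    · nlinarith [mul_pos hρ p2]
  · rintro ⟨p1, p2⟩
    set w : ℂ := z * Complex.exp (((-a : ℝ) : ℂ) * Complex.I) with hw
    have him : w.im = z.im * Real.cos a - z.re * Real.sin a := by
      rw [hw, Complex.mul_im, Complex.exp_ofReal_mul_I_re, Complex.exp_ofReal_mul_I_im,
        Real.cos_neg, Real.sin_neg]
      ring
    have hz : z = (‖w‖ : ℂ) * Complex.exp (((w.arg + a : ℝ) : ℂ) * Complex.I) := by
      have h := Complex.norm_mul_exp_arg_mul_I w
      push_cast
      rw [add_mul, Complex.exp_add, ← mul_assoc, h, hw, mul_assoc, ← Complex.exp_add]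
      simp
    have hw0 : w ≠ 0 := by
      rintro h
      rw [h] at him
      simp at him
      linarith
    have hρ : 0 < ‖w‖ := norm_pos_iff.2 hw0
    have harg0 : 0 < w.arg := by
      have h0 : 0 ≤ w.arg := Complex.arg_nonneg_iff.2 (by linarith)
      rcases h0.lt_or_eq with h | h
      · exact h
      · have := (Complex.arg_eq_zero_iff.1 h.symm).2
        linarith
    have hargpi : w.arg ≤ Real.pi := Complex.arg_le_pi w
    refine ⟨‖w‖, w.arg + a, hρ, ⟨by linarith, ?_⟩, hz⟩
    have e1 : z.re = ‖w‖ * Real.cos (w.arg + a) := by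
      conv_lhs => rw [hz]
      rw [Complex.re_ofReal_mul, Complex.exp_ofReal_mul_I_re]
    have e2 : z.im = ‖w‖ * Real.sin (w.arg + a) := by
      conv_lhs => rw [hz]
      rw [Complex.im_ofReal_mul, Complex.exp_ofReal_mul_I_im]
    rw [e1, e2] at p2
    have p3 : 0 < Real.sin (b - (w.arg + a)) := by
      rw [Real.sin_sub]
      by_contra hc
      push Not at hc
      nlinarith [mul_nonneg hρ.le (sub_nonneg.2 hc)]
    by_contra hc
    push Not at hc
    have : Real.sin (b - (w.arg + a)) ≤ 0 :=
      Real.sin_nonpos_of_nonpos_of_neg_pi_le (by linarith) (by linarith)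
    linarith

lemma isOpen_openSector {a b : ℝ} (hab : a < b) (hb : b - a < Real.pi) :
    IsOpen (openSector a b) := by
  have : openSector a b = {z : ℂ | 0 < z.im * Real.cos a - z.re * Real.sin a} ∩
      {z : ℂ | z.im * Real.cos b - z.re * Real.sin b < 0} := by
    ext z; exact mem_openSector_iff hab hb z
  rw [this]
  exact (isOpen_lt (by fun_prop) (by fun_prop)).inter (isOpen_lt (by fun_prop) (by fun_prop))

lemma convex_openSector {a b : ℝ} (hab : a < b) (hb : b - a < Real.pi) :
    Convex ℝ (openSector a b) := by
  rw [convex_iff_forall_pos]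
  intro x hx y hy s t hs ht hst
  rw [mem_openSector_iff hab hb] at *
  simp only [Complex.add_im, Complex.add_re, Complex.real_smul, Complex.re_ofReal_mul,
    Complex.im_ofReal_mul]
  constructor
  · nlinarith [mul_pos hs hx.1, mul_pos ht hy.1]
  · nlinarith [mul_pos hs (neg_pos.2 hx.2), mul_pos ht (neg_pos.2 hy.2)]

/-- bump function -/
def bmp (z : ℂ) (r : ℝ) (w : ℂ) : ℂ :=
  1 - (starRingEnd ℂ (w - z) / ((max (r ^ 2) (‖w - z‖ ^ 2) : ℝ) : ℂ)) * (w - z)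

lemma den_ne {r : ℝ} (hr : 0 < r) (s : ℝ) : ((max (r ^ 2) s : ℝ) : ℂ) ≠ 0 := by
  have : 0 < max (r ^ 2) s := lt_max_of_lt_left (by positivity)
  exact_mod_cast this.ne'

lemma cont_k (z : ℂ) {r : ℝ} (hr : 0 < r) : Continuous fun w : ℂ =>
    (starRingEnd ℂ (w - z) / ((max (r ^ 2) (‖w - z‖ ^ 2) : ℝ) : ℂ)) := by
  refine Continuous.div (by fun_prop) ?_ (fun w => den_ne hr _)
  exact Complex.continuous_ofReal.comp (by fun_prop)

lemma cont_bmp (z : ℂ) {r : ℝ} (hr : 0 < r) : Continuous (bmp z r) := by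
  unfold bmp
  exact continuous_const.sub ((cont_k z hr).mul (by fun_prop))

lemma bmp_self (z : ℂ) (r : ℝ) : bmp z r z = 1 := by simp [bmp]

lemma bmp_eq_zero {z : ℂ} {r : ℝ} (hr : 0 < r) {w : ℂ} (h : r ≤ ‖w - z‖) : bmp z r w = 0 := by
  unfold bmp
  rw [max_eq_right (by gcongr), div_mul_eq_mul_div, Complex.conj_mul']
  have : (0 : ℝ) < ‖w - z‖ := by linarith
  have h2 : ((‖w - z‖ : ℝ) : ℂ) ≠ 0 := by exact_mod_cast this.ne'
  push_cast
  rw [div_self (pow_ne_zero 2 h2), sub_self]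

lemma cross_zero {T : H →L[ℂ] H} (hT : IsStarNormal T) {f g : ℂ → ℂ}
    (hf : Continuous f) (hg : Continuous g) (h : ∀ w, f w = 0 ∨ g w = 0) (a b : H) :
    ⟪cfc f T a, cfc g T b⟫_ℂ = 0 ∧ ⟪cfc f T a, T (cfc g T b)⟫_ℂ = 0 := by
  have key : ∀ g : ℂ → ℂ, Continuous g → (∀ w, f w = 0 ∨ g w = 0) →
      ⟪cfc f T a, cfc g T b⟫_ℂ = 0 := by
    intro g hg h
    rw [← ContinuousLinearMap.adjoint_inner_right, ← ContinuousLinearMap.star_eq_adjoint,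
      ← cfc_star, ← mul_apply_eq_comp,
      ← cfc_mul _ _ T (by fun_prop) (by fun_prop)]
    have : (fun x => star (f x) * g x) = fun _ => 0 := by
      ext w
      rcases h w with h | h <;> simp [h]
    rw [this]
    simp
  refine ⟨key g hg h, ?_⟩
  have e : T (cfc g T b) = cfc (fun w => w * g w) T b := by
    rw [cfc_mul (fun w => w) g T (by fun_prop) (by fun_prop), cfc_id' ℂ T]
    rfl
  rw [e]
  refine key _ (by fun_prop) fun w => ?_
  rcases h w with h | h
  · exact Or.inl h
  · right; simp [h]

lemma bmp_eigen {T : H →L[ℂ] H} (hT : IsStarNormal T) {z : ℂ} {r : ℝ} (hr : 0 < r) {x : H}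
    (hx : T x = z • x) : cfc (bmp z r) T x = x := by
  have e : cfc (bmp z r) T = 1 - cfc (fun w : ℂ =>
    (starRingEnd ℂ (w - z) / ((max (r ^ 2) (‖w - z‖ ^ 2) : ℝ) : ℂ))) T * (T - algebraMap ℂ _ z) := by
    unfold bmp
    have hk := cont_k z hr
    generalize hkk : (fun w : ℂ => (starRingEnd ℂ (w - z) /
      ((max (r ^ 2) (‖w - z‖ ^ 2) : ℝ) : ℂ))) = q at hk ⊢
    have hq : (fun w : ℂ => 1 - (starRingEnd ℂ (w - z) /
      ((max (r ^ 2) (‖w - z‖ ^ 2) : ℝ) : ℂ)) * (w - z)) = fun w => 1 - q w * (w - z) := by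
      rw [← hkk]
    rw [hq]
    rw [cfc_sub _ _ T (by fun_prop) (by fun_prop), cfc_const_one ℂ T,
      cfc_mul _ _ T (by fun_prop) (by fun_prop), cfc_sub _ _ T (by fun_prop) (by fun_prop),
      cfc_id' ℂ T, cfc_const z T]
  rw [e]
  simp [Algebra.algebraMap_eq_smul_one, hx]

lemma bmp_approx {T : H →L[ℂ] H} (hT : IsStarNormal T) {z : ℂ} {r : ℝ} (hr : 0 < r) {x y : H}
    (hx : x = cfc (bmp z r) T y) (h1 : ‖x‖ = 1) : ⟪x, T x⟫_ℂ ∈ Metric.closedBall z r := by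
  have hb := cont_bmp z hr
  set h : ℂ → ℂ := fun w => (w - z) * ((r / max r ‖w - z‖ : ℝ) : ℂ) with hh
  have hden : ∀ w : ℂ, 0 < max r ‖w - z‖ := fun w => lt_max_of_lt_left hr
  have hc : Continuous h := by
    refine Continuous.mul (by fun_prop) (Complex.continuous_ofReal.comp ?_)
    exact Continuous.div (by fun_prop) (by fun_prop) fun w => (hden w).ne'
  have hn : ‖cfc h T‖ ≤ r := by
    refine norm_cfc_le hr.le fun w _ => ?_
    rw [hh]
    simp only [norm_mul, Complex.norm_real, norm_div, Real.norm_eq_abs, abs_of_pos (hden w),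
      abs_of_pos hr]
    rw [mul_div_assoc', div_le_iff₀ (hden w), mul_comm]
    gcongr
    exact le_max_right _ _
  have e : T x - z • x = cfc h T x := by
    have e1 : cfc h T * cfc (bmp z r) T = (T - algebraMap ℂ _ z) * cfc (bmp z r) T := by
      rw [← cfc_mul _ _ T (by fun_prop) (by fun_prop)]
      have : (fun w => h w * bmp z r w) = fun w => (w - z) * bmp z r w := by
        ext w
        rcases le_or_gt r ‖w - z‖ with hw | hw
        · simp [bmp_eq_zero hr hw]
        · simp [hh, max_eq_left hw.le, hr.ne']
      rw [this, cfc_mul _ _ T (by fun_prop) (by fun_prop),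
        cfc_sub _ _ T (by fun_prop) (by fun_prop), cfc_id' ℂ T, cfc_const z T]
    have e2 := congrArg (fun A : H →L[ℂ] H => A y) e1
    simp only [mul_apply_eq_comp, ← hx] at e2
    rw [e2]
    simp [Algebra.algebraMap_eq_smul_one]
  have hxx : ⟪x, x⟫_ℂ = 1 := by rw [inner_self_eq_norm_sq_to_K, h1]; simp
  have : ⟪x, T x⟫_ℂ - z = ⟪x, T x - z • x⟫_ℂ := by
    rw [inner_sub_right, inner_smul_right, hxx, mul_one]
  rw [Metric.mem_closedBall, dist_eq_norm, this, e]
  calc _ ≤ ‖x‖ * ‖cfc h T x‖ := norm_inner_le_norm _ _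
    _ ≤ ‖x‖ * (‖cfc h T‖ * ‖x‖) := by gcongr; exact ContinuousLinearMap.le_opNorm _ _
    _ ≤ r := by rw [h1]; simpa using hn

/-- The good orthonormal family. -/
lemma good_family {T : H →L[ℂ] H} (hT : IsStarNormal T) {U : Set ℂ} (hU : IsOpen U) (k : ℕ)
    (h : (U ∩ spectrum ℂ T).Infinite ∨ ∃ z ∈ U ∩ spectrum ℂ T, HasInfMultEigenvalue T z) :
    ∃ x : Fin k → H, Orthonormal ℂ x ∧ (∀ i j, i ≠ j → ⟪x i, T (x j)⟫_ℂ = 0) ∧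
      (∀ i, ⟪x i, T (x i)⟫_ℂ ∈ U) ∧
      ∀ i, ∃ f : ℂ → ℂ, Continuous f ∧ (∀ w, w ∉ U → f w = 0) ∧ ∃ y, x i = cfc f T y := by
  rcases h with h | ⟨z, ⟨hzU, -⟩, hz⟩
  · have z : Fin k ↪ ↥(U ∩ spectrum ℂ T) := 
      (Fin.valEmbedding).trans (h.natEmbedding)
    have hr : ∀ᶠ r : ℝ in nhdsWithin 0 (Set.Ioi 0), 0 < r ∧ (∀ i, Metric.closedBall (z i : ℂ) r ⊆ U) ∧
        ∀ i j, i ≠ j → 2 * r < dist (z i : ℂ) (z j) := by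
      refine (eventually_mem_nhdsWithin).and (Filter.Eventually.and ?_ ?_)
      · rw [Filter.eventually_all]
        intro i
        exact nhdsWithin_le_nhds (eventually_closedBall_subset (hU.mem_nhds (z i).2.1))
      · rw [Filter.eventually_all]
        intro i
        rw [Filter.eventually_all]
        intro j
        by_cases hij : i = j
        · simp [hij]
        have hd : 0 < dist (z i : ℂ) (z j) :=
          dist_pos.2 fun hh => hij (z.injective (Subtype.ext hh))
        have : ∀ᶠ r : ℝ in nhds 0, 2 * r < dist (z i : ℂ) (z j) :=
          (continuous_const.mul continuous_id).continuousAt.eventually_lt continuousAt_const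
            (by simpa using hd)
        exact nhdsWithin_le_nhds (this.mono fun r hr _ => hr)
    obtain ⟨r, hr0, hrU, hrd⟩ := hr.exists
    have hex : ∀ i, ∃ x y : H, ‖x‖ = 1 ∧ x = cfc (bmp (z i) r) T y := by
      intro i
      have hb := cont_bmp (z i : ℂ) hr0
      have hne : cfc (bmp (z i) r) T ≠ 0 := by
        intro h0
        have := norm_apply_le_norm_cfc (bmp (z i) r) T (z i).2.2 (by fun_prop)
        rw [h0, bmp_self] at this
        norm_num at this
      obtain ⟨y, hy⟩ : ∃ y, cfc (bmp (z i) r) T y ≠ 0 := by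
        by_contra hc
        push Not at hc
        exact hne (ContinuousLinearMap.ext hc)
      refine ⟨_, ((‖cfc (bmp (z i) r) T y‖ : ℂ)⁻¹) • y, ?_, rfl⟩
      rw [map_smul]
      exact norm_smul_inv_norm hy
    choose x y hx1 hxy using hex
    have hcr : ∀ i j, i ≠ j → ⟪x i, x j⟫_ℂ = 0 ∧ ⟪x i, T (x j)⟫_ℂ = 0 := by
      intro i j hij
      rw [hxy i, hxy j]
      refine cross_zero hT (cont_bmp _ hr0) (cont_bmp _ hr0) (fun w => ?_) _ _
      by_contra hc
      push Not at hc
      have a1 : ‖w - z i‖ < r := by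
        by_contra h'; exact hc.1 (bmp_eq_zero hr0 (not_lt.1 h'))
      have a2 : ‖w - z j‖ < r := by
        by_contra h'; exact hc.2 (bmp_eq_zero hr0 (not_lt.1 h'))
      rw [← dist_eq_norm] at a1 a2
      have := dist_triangle_left (z i : ℂ) (z j) w
      linarith [hrd i j hij]
    refine ⟨x, ⟨hx1, fun i j hij => (hcr i j hij).1⟩, fun i j hij => (hcr i j hij).2,
      fun i => hrU i (bmp_approx hT hr0 (hxy i) (hx1 i)), fun i =>
      ⟨_, cont_bmp (z i) hr0, fun w hw => bmp_eq_zero hr0 ?_, _, hxy i⟩⟩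
    by_contra h'
    push Not at h'
    exact hw (hrU i (by rw [Metric.mem_closedBall, dist_eq_norm]; exact h'.le))
  · unfold HasInfMultEigenvalue at hz
    set E := LinearMap.ker ((T : H →ₗ[ℂ] H) - z • (LinearMap.id : H →ₗ[ℂ] H)) with hE
    obtain ⟨e, he⟩ : ∃ e : Fin k → E, Orthonormal ℂ e := by
      have hrank : Cardinal.aleph0 ≤ Module.rank ℂ E := by
        by_contra hc
        exact hz (Module.rank_lt_aleph0_iff.1 (not_le.1 hc))
      obtain ⟨v, hv⟩ := exists_linearIndependent_of_le_rank
        (R := ℂ) (M := E) (n := k) ((Cardinal.natCast_lt_aleph0).le.trans hrank)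
      exact ⟨_, InnerProductSpace.gramSchmidtNormed_orthonormal hv⟩
    have hTe : ∀ i, T (e i : H) = z • (e i : H) := by
      intro i
      have := (e i).2
      have h3 : T (e i : H) - z • (e i : H) = 0 := LinearMap.mem_ker.1 this
      exact sub_eq_zero.1 h3
    have ho : Orthonormal ℂ fun i => (e i : H) := he.comp_linearIsometry E.subtypeₗᵢ
    obtain ⟨r, hr0, hrU⟩ := Metric.isOpen_iff.1 hU z hzU
    refine ⟨fun i => e i, ho, ?_, ?_, ?_⟩
    · intro i j hij
      rw [hTe, inner_smul_right, ho.2 hij, mul_zero]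
    · intro i
      rw [hTe, inner_smul_right, inner_self_eq_norm_sq_to_K, ho.1 i]
      simpa using hzU
    · intro i
      refine ⟨_, cont_bmp z hr0, fun w hw => bmp_eq_zero hr0 ?_, e i,
        (bmp_eigen hT hr0 (hTe i)).symm⟩
      by_contra h'
      push Not at h'
      exact hw (hrU (by rw [Metric.mem_ball, dist_eq_norm]; exact h'))

lemma span_range {T : H →L[ℂ] H} {U : Set ℂ} (hU : Convex ℝ U) {k : ℕ} {x : Fin k → H}
    (ho : Orthonormal ℂ x) (h0 : ∀ i j, i ≠ j → ⟪x i, T (x j)⟫_ℂ = 0)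
    (hx : ∀ i, ⟪x i, T (x i)⟫_ℂ ∈ U) :
    Module.finrank ℂ (Submodule.span ℂ (Set.range x)) = k ∧
    ∀ v ∈ Submodule.span ℂ (Set.range x), ‖v‖ = 1 → ⟪v, T v⟫_ℂ ∈ U := by
  constructor
  · rw [finrank_span_eq_card ho.linearIndependent, Fintype.card_fin]
  · intro v hv hv1
    obtain ⟨c, rfl⟩ := (Submodule.mem_span_range_iff_exists_fun ℂ).1 hv
    have hs : ∑ i, ‖c i‖ ^ 2 = 1 := by
      have h2 := ho.inner_sum c c Finset.univ
      rw [inner_self_eq_norm_sq_to_K, hv1] at h2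
      simp only [Complex.conj_mul'] at h2
      have h3 : ((∑ i, ‖c i‖ ^ 2 : ℝ) : ℂ) = 1 := by
        push_cast
        rw [← h2]
        simp
      exact_mod_cast h3
    have e : ⟪∑ i, c i • x i, T (∑ i, c i • x i)⟫_ℂ
        = ∑ i, (‖c i‖ ^ 2) • ⟪x i, T (x i)⟫_ℂ := by
      rw [map_sum, sum_inner]
      refine Finset.sum_congr rfl fun i _ => ?_
      rw [inner_sum, Finset.sum_eq_single i]
      · rw [map_smul, inner_smul_left, inner_smul_right, ← mul_assoc, Complex.conj_mul',
          Complex.real_smul]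
        push_cast
        rfl
      · intro j _ hj
        rw [map_smul, inner_smul_left, inner_smul_right, h0 i j hj.symm]
        simp
      · simp
    rw [e]
    exact hU.sum_mem (fun i _ => by positivity) hs fun i _ => hx i

lemma span_cross {B : H →L[ℂ] H} {k : ℕ} {x y : Fin k → H}
    (h : ∀ i j, ⟪x i, B (y j)⟫_ℂ = 0) :
    ∀ v ∈ Submodule.span ℂ (Set.range x), ∀ w ∈ Submodule.span ℂ (Set.range y),
      ⟪v, B w⟫_ℂ = 0 := by
  intro v hv w hw
  obtain ⟨c, rfl⟩ := (Submodule.mem_span_range_iff_exists_fun ℂ).1 hv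
  obtain ⟨d, rfl⟩ := (Submodule.mem_span_range_iff_exists_fun ℂ).1 hw
  simp [sum_inner, inner_sum, inner_smul_left, inner_smul_right, h]

/-- Let `T` be a normal operator on an infinite-dimensional Hilbert space with
`σ(T) ⊆ {ρe^{it} : ρ > 0, t ∈ [s₁,s₂]}`, `π ≤ s₁ < s₂ ≤ 2π`, and let `s₃ ∈ (s₁,s₂)`,
`ℒ = {ρe^{it} : ρ>0, t∈(s₁,s₃)}`, `ℛ = {ρe^{it} : ρ>0, t∈(s₃,s₂)}`.
(a) If `ℒ ∩ σ(T)` is infinite or contains an eigenvalue of infinite multiplicity,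
then `T` has a `k`-dimensional compression with numerical range in `ℒ`; (b) likewise
for `ℛ`; and if both hypotheses hold there are orthogonal `k`-dimensional subspaces
`K₁, K₂` on which the compression of `T` is block diagonal `T₁ ⊕ T₂` with
`W(T₁) ⊆ ℒ` and `W(T₂) ⊆ ℛ`. -/
theorem normal_sector_compressions
    (hH : ¬ FiniteDimensional ℂ H)
    (T : H →L[ℂ] H)
    (hT : ContinuousLinearMap.adjoint T ∘L T = T ∘L ContinuousLinearMap.adjoint T)
    (s₁ s₂ : ℝ) (h₁ : Real.pi ≤ s₁) (h₁₂ : s₁ < s₂) (h₂ : s₂ ≤ 2 * Real.pi)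
    (hspec : spectrum ℂ T ⊆ closedSector s₁ s₂)
    (k : ℕ) (hk : 1 ≤ k) (s₃ : ℝ) (hs₃ : s₃ ∈ Set.Ioo s₁ s₂) :
    ((openSector s₁ s₃ ∩ spectrum ℂ T).Infinite ∨
        (∃ z ∈ openSector s₁ s₃ ∩ spectrum ℂ T, HasInfMultEigenvalue T z) →
      ∃ K : Submodule ℂ H, Module.finrank ℂ K = k ∧
        ∀ x ∈ K, ‖x‖ = 1 → ⟪x, T x⟫_ℂ ∈ openSector s₁ s₃) ∧
    ((openSector s₃ s₂ ∩ spectrum ℂ T).Infinite ∨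
        (∃ z ∈ openSector s₃ s₂ ∩ spectrum ℂ T, HasInfMultEigenvalue T z) →
      ∃ K : Submodule ℂ H, Module.finrank ℂ K = k ∧
        ∀ x ∈ K, ‖x‖ = 1 → ⟪x, T x⟫_ℂ ∈ openSector s₃ s₂) ∧
    (((openSector s₁ s₃ ∩ spectrum ℂ T).Infinite ∨
        (∃ z ∈ openSector s₁ s₃ ∩ spectrum ℂ T, HasInfMultEigenvalue T z)) →
      ((openSector s₃ s₂ ∩ spectrum ℂ T).Infinite ∨
        (∃ z ∈ openSector s₃ s₂ ∩ spectrum ℂ T, HasInfMultEigenvalue T z)) →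
      ∃ K₁ K₂ : Submodule ℂ H,
        Module.finrank ℂ K₁ = k ∧ Module.finrank ℂ K₂ = k ∧
        (∀ x ∈ K₁, ∀ y ∈ K₂, ⟪x, y⟫_ℂ = 0) ∧
        (∀ x ∈ K₁, ∀ y ∈ K₂, ⟪y, T x⟫_ℂ = 0 ∧ ⟪x, T y⟫_ℂ = 0) ∧
        (∀ x ∈ K₁, ‖x‖ = 1 → ⟪x, T x⟫_ℂ ∈ openSector s₁ s₃) ∧
        (∀ x ∈ K₂, ‖x‖ = 1 → ⟪x, T x⟫_ℂ ∈ openSector s₃ s₂)) := by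
  have hN : IsStarNormal T := ⟨hT⟩
  obtain ⟨h31, h32⟩ := hs₃
  have oL := isOpen_openSector h31 (by linarith)
  have oR := isOpen_openSector h32 (by linarith)
  have cL := convex_openSector h31 (by linarith)
  have cR := convex_openSector h32 (by linarith)
  refine ⟨fun h => ?_, fun h => ?_, fun hL hR => ?_⟩
  · obtain ⟨x, a, b, c, -⟩ := good_family hN oL k h
    exact ⟨_, span_range cL a b c⟩
  · obtain ⟨x, a, b, c, -⟩ := good_family hN oR k h
    exact ⟨_, span_range cR a b c⟩
  · obtain ⟨x, a, b, c, d⟩ := good_family hN oL k hL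
    obtain ⟨y, a', b', c', d'⟩ := good_family hN oR k hR
    have hcr : ∀ i j, (⟪x i, y j⟫_ℂ = 0 ∧ ⟪x i, T (y j)⟫_ℂ = 0) ∧ ⟪y j, T (x i)⟫_ℂ = 0 := by
      intro i j
      obtain ⟨f, hf, hf0, u, hu⟩ := d i
      obtain ⟨g, hg, hg0, v, hv⟩ := d' j
      have hfg : ∀ w, f w = 0 ∨ g w = 0 := by
        intro w
        by_cases hw : w ∈ openSector s₁ s₃
        · right
          apply hg0
          intro hw'
          rw [mem_openSector_iff h31 (by linarith)] at hw
          rw [mem_openSector_iff h32 (by linarith)] at hw'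
          linarith [hw.2, hw'.1]
        · exact Or.inl (hf0 w hw)
      rw [hu, hv]
      exact ⟨cross_zero hN hf hg hfg u v, (cross_zero hN hg hf (fun w => (hfg w).symm) v u).2⟩
    refine ⟨_, _, (span_range cL a b c).1, (span_range cR a' b' c').1,
      fun v hv w hw => ?_, fun v hv w hw => ⟨?_, ?_⟩,
      (span_range cL a b c).2, (span_range cR a' b' c').2⟩
    · exact span_cross (B := ContinuousLinearMap.id ℂ H) (fun i j => (hcr i j).1.1) v hv w hw
    · exact span_cross (fun j i => (hcr i j).2) w hw v hv
    · exact span_cross (fun i j => (hcr i j).1.2) v hv w hw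
end
end
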